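/- arXiv:1001.1959 — 6 statements merged into one kernel-verified Lean document; each statement's English description precedes it below -/
import Mathlib

section
/- Let θ = {a = t_0 < t_1 < ⋯ < t_m = b} be a partition of [a,b] ⊆ [0,∞), let (P_t)_{t≥0} be an increasing family of orthogonal projections on H, and let f : [0,∞) → B(H) be hermitian and adapted-commuting with respect to (P_t). Let θ' = θ ∪ {t'} with t_j < t' < t_{j+1} be a one-point refinement of θ. Then σ_{θ'} − σ_θ = (P_{t_{j+1}} − P_{t'}) (f(t') − f(t_j)) (P_{t_{j+1}} − P_{t'}); in particular, if f is increasing then σ_{θ'} − σ_θ is a positive operator. -/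
/-- `sigmaSum f P θ` is the operator sum σ_θ = Σ_{k=1}^m f(t_{k−1})(P_{t_k} − P_{t_{k−1}})
where t₀ < t₁ < ⋯ < tₘ is the increasing enumeration of the finite set θ. -/
noncomputable def sigmaSum {H : Type*} [NormedAddCommGroup H] [InnerProductSpace ℂ H]
    (f P : ℝ → H →L[ℂ] H) (θ : Finset ℝ) : H →L[ℂ] H :=
  (((θ.sort (· ≤ ·)).zip (θ.sort (· ≤ ·)).tail).map
    (fun p => f p.1 ∘L (P p.2 - P p.1))).sum

/-- `IsPartitionOf a b θ`: θ is a partition a = t₀ < t₁ < ⋯ < tₘ = b of [a,b]. -/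
def IsPartitionOf (a b : ℝ) (θ : Finset ℝ) : Prop :=
  a ∈ θ ∧ b ∈ θ ∧ ∀ x ∈ θ, x ∈ Set.Icc a b

theorem zip_tail_sum_insert {M : Type*} [AddCommGroup M] (g : ℝ × ℝ → M) (x y z : ℝ)
    (l₂ : List ℝ) : ∀ l₁ : List ℝ,
    (((l₁ ++ x :: y :: z :: l₂).zip (l₁ ++ x :: y :: z :: l₂).tail).map g).sum -
      (((l₁ ++ x :: z :: l₂).zip (l₁ ++ x :: z :: l₂).tail).map g).sum =
      g (x, y) + g (y, z) - g (x, z)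
  | [] => by simp; abel
  | [c] => by
      have := zip_tail_sum_insert g x y z l₂ []
      simpa using this
  | c :: d :: l => by
      have := zip_tail_sum_insert g x y z l₂ (d :: l)
      simpa using this

theorem sort_decomp (θ : Finset ℝ) (t' tj tnext : ℝ) (ht'θ : t' ∉ θ)
    (htj : tj ∈ θ) (htnext : tnext ∈ θ) (htj_lt : tj < t') (hlt_tnext : t' < tnext)
    (htj_max : ∀ s ∈ θ, s < t' → s ≤ tj) (htnext_min : ∀ s ∈ θ, t' < s → tnext ≤ s) :
    ∃ l₁ l₂ : List ℝ, θ.sort (· ≤ ·) = l₁ ++ tj :: tnext :: l₂ ∧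
      (insert t' θ).sort (· ≤ ·) = l₁ ++ tj :: t' :: tnext :: l₂ := by
  have hmem : ∀ s, s ∈ θ.sort (· ≤ ·) ↔ s ∈ θ := fun s => Finset.mem_sort _
  have hs : (θ.sort (· ≤ ·)).Pairwise (· < ·) := θ.sortedLT_sort.pairwise
  have hfin : (θ.sort (· ≤ ·)).toFinset = θ := Finset.sort_toFinset _ _
  generalize θ.sort (· ≤ ·) = l at hmem hs hfin
  obtain ⟨l₁, r, rfl⟩ := List.append_of_mem ((hmem tj).2 htj)
  have h1 := (hmem tnext).2 htnext
  have hs' := hs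
  simp only [List.pairwise_append, List.pairwise_cons, List.mem_cons] at hs'
  obtain ⟨hl1, ⟨hjr, hr⟩, hcross⟩ := hs'
  have h2 : tnext ∈ r := by
    simp only [List.mem_append, List.mem_cons] at h1
    rcases h1 with h | h | h
    · have := hcross _ h tj (Or.inl rfl); linarith
    · linarith
    · exact h
  cases r with
  | nil => simp at h2
  | cons z l₂ =>
    have hzθ : z ∈ θ := (hmem z).1 (by simp)
    have hz : t' < z := by
      by_contra hc
      rcases lt_or_eq_of_le (not_lt.1 hc) with h | h
      · have := htj_max z hzθ h
        have := hjr z (by simp)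
        linarith
      · exact ht'θ (h ▸ hzθ)
    have hzn : z = tnext := by
      apply le_antisymm _ (htnext_min z hzθ hz)
      rcases List.mem_cons.1 h2 with h | h
      · exact h.ge
      · exact ((List.pairwise_cons.1 hr).1 _ h).le
    subst hzn
    refine ⟨l₁, l₂, rfl, ?_⟩
    have hp : (l₁ ++ tj :: t' :: z :: l₂).Pairwise (· < ·) := by
      simp only [List.pairwise_append, List.pairwise_cons, List.mem_cons] at hr ⊢
      refine ⟨hl1, ⟨?_, ?_, hr⟩, ?_⟩
      · rintro c (rfl | h)
        · exact htj_lt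
        · exact hjr c (List.mem_cons.2 h)
      · rintro c (rfl | h)
        · exact hz
        · exact hz.trans (hr.1 c h)
      · rintro c hc d (rfl | rfl | h)
        · exact hcross c hc _ (Or.inl rfl)
        · exact (hcross c hc tj (Or.inl rfl)).trans htj_lt
        · exact hcross c hc d (Or.inr (by simpa using h))
    have he : insert t' θ = (l₁ ++ tj :: t' :: z :: l₂).toFinset := by
      rw [← hfin]; ext c; simp; tauto
    rw [he]
    exact (List.toFinset_sort (· ≤ ·) (hp.imp fun h => ne_of_lt h)).2 (hp.imp fun h => le_of_lt h)

/-- For a one-point refinement θ' = θ ∪ {t'} with t_j < t' < t_{j+1}, one has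
σ_{θ'} − σ_θ = (P_{t_{j+1}} − P_{t'})(f(t') − f(t_j))(P_{t_{j+1}} − P_{t'}); in particular,
if f is increasing then σ_{θ'} − σ_θ is a positive operator. -/
theorem sigma_one_point_refinement
    {H : Type*} [NormedAddCommGroup H] [InnerProductSpace ℂ H] [CompleteSpace H]
    (a b : ℝ) (ha : 0 ≤ a) (hab : a < b)
    (P : ℝ → H →L[ℂ] H)
    (hP_proj : ∀ s, 0 ≤ s → IsSelfAdjoint (P s) ∧ P s ∘L P s = P s)
    (hP_mono : ∀ s u, 0 ≤ s → s ≤ u → P s ∘L P u = P s ∧ P u ∘L P s = P s)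
    (f : ℝ → H →L[ℂ] H)
    (hf_herm : ∀ s, 0 ≤ s → IsSelfAdjoint (f s))
    (hf_adapted : ∀ s u, 0 ≤ s → s ≤ u → f s ∘L P u = P u ∘L f s)
    (θ : Finset ℝ) (hθ : IsPartitionOf a b θ)
    (t' : ℝ) (ht' : t' ∈ Set.Ioo a b) (ht'θ : t' ∉ θ)
    (tj tnext : ℝ) (htj : tj ∈ θ) (htnext : tnext ∈ θ)
    (htj_lt : tj < t') (hlt_tnext : t' < tnext)
    (htj_max : ∀ s ∈ θ, s < t' → s ≤ tj)
    (htnext_min : ∀ s ∈ θ, t' < s → tnext ≤ s) :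
    sigmaSum f P (insert t' θ) - sigmaSum f P θ =
      (P tnext - P t') ∘L (f t' - f tj) ∘L (P tnext - P t') ∧
    ((∀ u v, 0 ≤ u → u ≤ v → (f v - f u).IsPositive) →
      (sigmaSum f P (insert t' θ) - sigmaSum f P θ).IsPositive) := by
  have hj0 : 0 ≤ tj := ha.trans (hθ.2.2 tj htj).1
  have h0 : 0 ≤ t' := hj0.trans htj_lt.le
  have hn0 : 0 ≤ tnext := h0.trans hlt_tnext.le
  have key : sigmaSum f P (insert t' θ) - sigmaSum f P θ =
      (P tnext - P t') ∘L (f t' - f tj) ∘L (P tnext - P t') := by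
    obtain ⟨l₁, l₂, e1, e2⟩ := sort_decomp θ t' tj tnext ht'θ htj htnext htj_lt hlt_tnext
      htj_max htnext_min
    unfold sigmaSum
    rw [e1, e2, zip_tail_sum_insert]
    have a1 := hf_adapted tj t' hj0 htj_lt.le
    have a2 := hf_adapted tj tnext hj0 (htj_lt.trans hlt_tnext).le
    have a3 := hf_adapted t' t' h0 le_rfl
    have a4 := hf_adapted t' tnext h0 hlt_tnext.le
    have p1 := (hP_proj t' h0).2
    have p2 := (hP_proj tnext hn0).2
    obtain ⟨p3, p4⟩ := hP_mono t' tnext h0 hlt_tnext.le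
    simp only [← ContinuousLinearMap.mul_def] at *
    have hD : (P tnext - P t') * (P tnext - P t') = P tnext - P t' := by
      rw [mul_sub, sub_mul, sub_mul, p1, p2, p3, p4]; abel
    have hc : (P tnext - P t') * (f t' - f tj) = (f t' - f tj) * (P tnext - P t') := by
      simp only [mul_sub, sub_mul, a1, a2, a3, a4]; abel
    rw [← mul_assoc, hc, mul_assoc, hD]
    simp only [mul_sub, sub_mul]; abel
  refine ⟨key, fun hf => ?_⟩
  rw [key]
  have hsa : IsSelfAdjoint (P tnext - P t') := (hP_proj tnext hn0).1.sub (hP_proj t' h0).1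
  have := (hf tj t' hj0 htj_lt.le).conj_adjoint (P tnext - P t')
  rwa [hsa.adjoint_eq] at this
end

section
/- Let (P_t)_{t≥0} be an increasing family of orthogonal projections on H and let f : [0,∞) → B(H) be hermitian, increasing, and adapted-commuting with respect to (P_t). Then for any partitions θ', θ'' of [a,b] ⊆ [0,∞) with θ'' refining θ', one has σ_{θ'} ≤ σ_{θ''} (i.e. σ_{θ''} − σ_{θ'} is a positive operator); thus the net (σ_θ), indexed by the partitions of [a,b] directed by refinement, is increasing. -/
/-- Auxiliary sum along a list, with a separate coefficient time `c` for the first step. -/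
noncomputable def auxSum {H : Type*} [NormedAddCommGroup H] [InnerProductSpace ℂ H]
    (f P : ℝ → H →L[ℂ] H) : ℝ → ℝ → List ℝ → H →L[ℂ] H
  | _, _, [] => 0
  | c, d, x :: l => f c * (P x - P d) + auxSum f P x x l

theorem zipSum_eq_auxSum {H : Type*} [NormedAddCommGroup H] [InnerProductSpace ℂ H]
    (f P : ℝ → H →L[ℂ] H) (l : List ℝ) (d : ℝ) :
    (((d :: l).zip (d :: l).tail).map (fun p => f p.1 ∘L (P p.2 - P p.1))).sum
      = auxSum f P d d l := by
  induction l generalizing d with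
  | nil => simp [auxSum]
  | cons x l ih =>
    have h := ih x
    simp only [List.tail_cons] at h ⊢
    rw [List.zip_cons_cons, List.map_cons, List.sum_cons, h, auxSum]
    rfl

theorem auxSum_shift {H : Type*} [NormedAddCommGroup H] [InnerProductSpace ℂ H]
    (f P : ℝ → H →L[ℂ] H) (l : List ℝ) (hl : l ≠ []) (c d x : ℝ) :
    auxSum f P c d l = f c * (P x - P d) + auxSum f P c x l := by
  cases l with
  | nil => exact absurd rfl hl
  | cons y l => simp only [auxSum]; noncomm_ring

theorem positive_mul_proj {H : Type*} [NormedAddCommGroup H] [InnerProductSpace ℂ H]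
    [CompleteSpace H] (B Q : H →L[ℂ] H) (hB : B.IsPositive) (hQ : IsSelfAdjoint Q)
    (hQQ : Q * Q = Q) (hc : B * Q = Q * B) : (B * Q).IsPositive := by
  have h := hB.conj_adjoint Q
  have e : Q ∘L B ∘L (ContinuousLinearMap.adjoint Q) = B * Q := by
    rw [← ContinuousLinearMap.star_eq_adjoint, hQ.star_eq]
    change Q * (B * Q) = B * Q
    rw [hc, ← mul_assoc, hQQ]
  rwa [e] at h

theorem auxSum_mono {H : Type*} [NormedAddCommGroup H] [InnerProductSpace ℂ H] [CompleteSpace H]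
    (f P : ℝ → H →L[ℂ] H)
    (key : ∀ c d x, 0 ≤ c → c ≤ d → d ≤ x → ((f d - f c) * (P x - P d)).IsPositive)
    (l₁ l₂ : List ℝ) (hs : l₁.Sublist l₂) : ∀ c d : ℝ, 0 ≤ c → c ≤ d →
      (∀ y ∈ l₂, d ≤ y) → l₂.Pairwise (· < ·) → (∀ y ∈ l₂, ∃ z ∈ l₁, y ≤ z) →
      (auxSum f P d d l₂ - auxSum f P c d l₁).IsPositive := by
  induction hs with
  | slnil =>
    intros
    simp [auxSum]
  | @cons l₁ l₂ x hs ih =>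
    intro c d hc hcd hd hp hz
    obtain ⟨z, hz1, -⟩ := hz x (by simp)
    have hne : l₁ ≠ [] := List.ne_nil_of_mem hz1
    have hdx := hd x (by simp)
    rw [List.pairwise_cons] at hp
    have h1 := ih c x hc (hcd.trans hdx) (fun y hy => (hp.1 y hy).le) hp.2
      (fun y hy => hz y (by simp [hy]))
    have h2 := (key c d x hc hcd hdx).add h1
    convert h2 using 1
    rw [auxSum_shift f P l₁ hne c d x, auxSum]
    noncomm_ring
  | @cons_cons l₁ l₂ x hs ih =>
    intro c d hc hcd hd hp hz
    have hdx := hd x (by simp)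
    rw [List.pairwise_cons] at hp
    have h1 := ih x x (hc.trans (hcd.trans hdx)) le_rfl (fun y hy => (hp.1 y hy).le) hp.2
      (fun y hy => by
        obtain ⟨z, hz1, hz2⟩ := hz y (by simp [hy])
        rcases List.mem_cons.1 hz1 with rfl | h
        · exact absurd (hp.1 y hy) (not_lt.2 hz2)
        · exact ⟨z, h, hz2⟩)
    have h2 := (key c d x hc hcd hdx).add h1
    convert h2 using 1
    rw [auxSum, auxSum]
    noncomm_ring

theorem partition_sort {a b : ℝ} {θ : Finset ℝ} (h : IsPartitionOf a b θ) :
    ∃ l, θ.sort (· ≤ ·) = a :: l := by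
  have hp := (Finset.sortedLT_sort θ).pairwise
  have hm : ∀ x, x ∈ θ.sort (· ≤ ·) ↔ x ∈ θ := fun x => Finset.mem_sort _
  cases e : θ.sort (· ≤ ·) with
  | nil => have := (hm a).2 h.1; rw [e] at this; simp at this
  | cons x l =>
    rw [e] at hp hm
    rw [List.pairwise_cons] at hp
    have hx := (h.2.2 x ((hm x).1 (by simp))).1
    rcases List.mem_cons.1 ((hm a).2 h.1) with rfl | h'
    · exact ⟨l, rfl⟩
    · exact absurd (hp.1 a h') (not_lt.2 hx)

/-- If f is hermitian, increasing and adapted-commuting, then for partitions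
θ' ⊆ θ'' of [a,b], σ_{θ''} − σ_{θ'} is a positive operator; i.e. the net (σ_θ), indexed by
partitions of [a,b] directed by refinement, is increasing. -/
theorem sigma_monotone_in_refinement
    {H : Type*} [NormedAddCommGroup H] [InnerProductSpace ℂ H] [CompleteSpace H]
    (a b : ℝ) (ha : 0 ≤ a) (hab : a < b)
    (P : ℝ → H →L[ℂ] H)
    (hP_proj : ∀ s, 0 ≤ s → IsSelfAdjoint (P s) ∧ P s ∘L P s = P s)
    (hP_mono : ∀ s u, 0 ≤ s → s ≤ u → P s ∘L P u = P s ∧ P u ∘L P s = P s)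
    (f : ℝ → H →L[ℂ] H)
    (hf_herm : ∀ s, 0 ≤ s → IsSelfAdjoint (f s))
    (hf_incr : ∀ u v, 0 ≤ u → u ≤ v → (f v - f u).IsPositive)
    (hf_adapted : ∀ s u, 0 ≤ s → s ≤ u → f s ∘L P u = P u ∘L f s)
    (θ' θ'' : Finset ℝ)
    (hθ' : IsPartitionOf a b θ') (hθ'' : IsPartitionOf a b θ'') (hsub : θ' ⊆ θ'') :
    (sigmaSum f P θ'' - sigmaSum f P θ').IsPositive := by
  have key : ∀ c d x, 0 ≤ c → c ≤ d → d ≤ x → ((f d - f c) * (P x - P d)).IsPositive := by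
    intro c d x hc hcd hdx
    have hd := hc.trans hcd
    have hx := hd.trans hdx
    refine positive_mul_proj _ _ (hf_incr c d hc hcd)
      ((hP_proj x hx).1.sub (hP_proj d hd).1) ?_ ?_
    · have e1 : P x * P x = P x := (hP_proj x hx).2
      have e2 : P d * P d = P d := (hP_proj d hd).2
      have e3 : P d * P x = P d := (hP_mono d x hd hdx).1
      have e4 : P x * P d = P d := (hP_mono d x hd hdx).2
      rw [mul_sub, sub_mul, sub_mul, e1, e2, e3, e4]
      abel
    · have e1 : f d * P x = P x * f d := hf_adapted d x hd hdx
      have e2 : f d * P d = P d * f d := hf_adapted d d hd le_rfl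
      have e3 : f c * P x = P x * f c := hf_adapted c x hc (hcd.trans hdx)
      have e4 : f c * P d = P d * f c := hf_adapted c d hc hcd
      simp only [mul_sub, sub_mul, e1, e2, e3, e4]
      abel
  obtain ⟨l₁, e₁⟩ := partition_sort hθ'
  obtain ⟨l₂, e₂⟩ := partition_sort hθ''
  have hp₁ := (Finset.sortedLT_sort θ').pairwise
  have hp₂ := (Finset.sortedLT_sort θ'').pairwise
  have hm₁ : ∀ x, x ∈ θ'.sort (· ≤ ·) ↔ x ∈ θ' := fun x => Finset.mem_sort _
  have hm₂ : ∀ x, x ∈ θ''.sort (· ≤ ·) ↔ x ∈ θ'' := fun x => Finset.mem_sort _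
  have hs : (θ'.sort (· ≤ ·)).Sublist (θ''.sort (· ≤ ·)) :=
    List.sublist_of_subperm_of_sortedLE
      (List.subperm_of_subset (Finset.sort_nodup _ _)
        (fun x hx => (hm₂ x).2 (hsub ((hm₁ x).1 hx))))
      (Finset.sortedLT_sort θ').sortedLE (Finset.sortedLT_sort θ'').sortedLE
  have main := auxSum_mono f P key _ _ hs a a ha le_rfl
    (fun y hy => (hθ''.2.2 y ((hm₂ y).1 hy)).1) hp₂
    (fun y hy => ⟨b, (hm₁ b).2 hθ'.2.1, (hθ''.2.2 y ((hm₂ y).1 hy)).2⟩)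
  unfold sigmaSum
  rw [e₁, e₂] at main ⊢
  rw [zipSum_eq_auxSum, zipSum_eq_auxSum]
  simpa [auxSum] using main
end

section
/- Let θ = {a = t_0 < t_1 < ⋯ < t_m = b} be a partition of [a,b] ⊆ [0,∞), let (P_t)_{t≥0} be an increasing family of orthogonal projections on H, and let f : [0,∞) → B(H) be hermitian and adapted-commuting with respect to (P_t). Then ‖σ_θ‖ ≤ max_{1≤k≤m} ‖f(t_{k−1})‖. -/
open scoped InnerProductSpace in
theorem aux_norm_sum_sq {H : Type*} [NormedAddCommGroup H] [InnerProductSpace ℂ H]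
    {m : ℕ} (v : Fin m → H) (hv : ∀ i j, i ≠ j → ⟪v i, v j⟫_ℂ = 0) :
    ‖∑ i, v i‖ ^ 2 = ∑ i, ‖v i‖ ^ 2 := by
  have h : ⟪∑ i, v i, ∑ j, v j⟫_ℂ = ∑ i, ⟪v i, v i⟫_ℂ := by
    rw [sum_inner]
    refine Finset.sum_congr rfl fun i _ => ?_
    rw [inner_sum]
    exact Finset.sum_eq_single i (fun j _ hj => hv i j hj.symm) (by simp)
  simp only [inner_self_eq_norm_sq_to_K] at h
  exact_mod_cast h

open scoped InnerProductSpace in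
theorem aux_main {H : Type*} [NormedAddCommGroup H] [InnerProductSpace ℂ H] [CompleteSpace H]
    {m : ℕ} (D F : Fin m → H →L[ℂ] H) (M : ℝ) (hM : 0 ≤ M) (hF : ∀ i, ‖F i‖ ≤ M)
    (hsa : ∀ i, IsSelfAdjoint (D i)) (hid : ∀ i, D i * D i = D i)
    (horth : ∀ i j, i ≠ j → D i * D j = 0) (hcomm : ∀ i, F i * D i = D i * F i) :
    ‖∑ i, F i * D i‖ ≤ M := by
  have key : ∀ i j (x y : H), i ≠ j → ⟪D i x, D j y⟫_ℂ = 0 := by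
    intro i j x y hij
    have h1 : ⟪D i x, D j y⟫_ℂ = ⟪x, D i (D j y)⟫_ℂ := (hsa i).isSymmetric x (D j y)
    have h2 : D i (D j y) = 0 := by
      have := congrArg (fun T : H →L[ℂ] H => T y) (horth i j hij)
      simpa using this
    rw [h1, h2, inner_zero_right]
  refine ContinuousLinearMap.opNorm_le_bound _ hM fun x => ?_
  have hS := aux_norm_sum_sq (fun i => D i x) (fun i j hij => key i j x x hij)
  have hSx : ‖∑ i, D i x‖ ^ 2 = (⟪∑ i, D i x, x⟫_ℂ).re := by
    rw [hS, sum_inner, Complex.re_sum]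
    refine Finset.sum_congr rfl fun i _ => ?_
    have h1 : ⟪D i (D i x), x⟫_ℂ = ⟪D i x, D i x⟫_ℂ := (hsa i).isSymmetric (D i x) x
    have h2 : D i (D i x) = D i x := congrArg (fun T : H →L[ℂ] H => T x) (hid i)
    rw [h2] at h1
    rw [h1, inner_self_eq_norm_sq_to_K]
    norm_cast
  have hle : ‖∑ i, D i x‖ ≤ ‖x‖ := by
    have h3 : (⟪∑ i, D i x, x⟫_ℂ).re ≤ ‖∑ i, D i x‖ * ‖x‖ :=
      (Complex.re_le_norm _).trans (norm_inner_le_norm _ _)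
    nlinarith [norm_nonneg (∑ i, D i x), norm_nonneg x]
  have hFD : ∀ i, F i (D i x) = D i (F i x) := fun i =>
    congrArg (fun T : H →L[ℂ] H => T x) (hcomm i)
  have hT := aux_norm_sum_sq (fun i => F i (D i x)) (fun i j hij => by
    simp only [hFD]; exact key i j _ _ hij)
  have hb : ‖∑ i, F i (D i x)‖ ^ 2 ≤ (M * ‖x‖) ^ 2 := by
    calc ‖∑ i, F i (D i x)‖ ^ 2 = ∑ i, ‖F i (D i x)‖ ^ 2 := hT
      _ ≤ ∑ i, M ^ 2 * ‖D i x‖ ^ 2 := by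
        refine Finset.sum_le_sum fun i _ => ?_
        rw [← mul_pow]
        gcongr
        exact (F i).le_of_opNorm_le (hF i) _
      _ = M ^ 2 * ‖∑ i, D i x‖ ^ 2 := by rw [← Finset.mul_sum, hS]
      _ ≤ M ^ 2 * ‖x‖ ^ 2 := by gcongr
      _ = (M * ‖x‖) ^ 2 := by ring
  have hfin := le_of_sq_le_sq hb (by positivity)
  simpa [ContinuousLinearMap.sum_apply] using hfin

/-- For a partition θ = {a = t₀ < ⋯ < tₘ = b} of [a,b] ⊆ [0,∞), increasing
projections (P_t), and hermitian adapted-commuting f, one has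
‖σ_θ‖ ≤ max_{1≤k≤m} ‖f(t_{k−1})‖. -/
theorem sigma_norm_le
    {H : Type*} [NormedAddCommGroup H] [InnerProductSpace ℂ H] [CompleteSpace H]
    (a b : ℝ) (ha : 0 ≤ a) (hab : a < b)
    (m : ℕ) (hm : 0 < m) (t : Fin (m + 1) → ℝ)
    (ht_mono : StrictMono t) (ht0 : t 0 = a) (htm : t (Fin.last m) = b)
    (P : ℝ → H →L[ℂ] H)
    (hP_proj : ∀ s, 0 ≤ s → IsSelfAdjoint (P s) ∧ P s ∘L P s = P s)
    (hP_mono : ∀ s u, 0 ≤ s → s ≤ u → P s ∘L P u = P s ∧ P u ∘L P s = P s)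
    (f : ℝ → H →L[ℂ] H)
    (hf_herm : ∀ s, 0 ≤ s → IsSelfAdjoint (f s))
    (hf_adapted : ∀ s u, 0 ≤ s → s ≤ u → f s ∘L P u = P u ∘L f s) :
    ‖∑ k : Fin m, f (t k.castSucc) ∘L (P (t k.succ) - P (t k.castSucc))‖ ≤
      (Finset.univ : Finset (Fin m)).sup' ⟨⟨0, hm⟩, Finset.mem_univ _⟩
        (fun k => ‖f (t k.castSucc)‖) := by
  have hpos : ∀ i, 0 ≤ t i := fun i =>
    (ha.trans ht0.symm.le).trans (ht_mono.monotone (Fin.zero_le i))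
  have hle : ∀ k : Fin m, t k.castSucc ≤ t k.succ := fun k =>
    (ht_mono Fin.castSucc_lt_succ).le
  have hPm1 : ∀ i j, i ≤ j → P (t i) * P (t j) = P (t i) := fun i j h =>
    (hP_mono _ _ (hpos i) (ht_mono.monotone h)).1
  have hPm2 : ∀ i j, i ≤ j → P (t j) * P (t i) = P (t i) := fun i j h =>
    (hP_mono _ _ (hpos i) (ht_mono.monotone h)).2
  have hcs : ∀ k : Fin m, k.castSucc ≤ k.succ := fun k => Fin.castSucc_lt_succ.le
  refine aux_main (fun k => P (t k.succ) - P (t k.castSucc)) (fun k => f (t k.castSucc)) _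
    ?_ ?_ ?_ ?_ ?_ ?_
  · exact (norm_nonneg _).trans
      (Finset.le_sup' (fun k : Fin m => ‖f (t k.castSucc)‖) (Finset.mem_univ ⟨0, hm⟩))
  · exact fun i => Finset.le_sup' (fun k : Fin m => ‖f (t k.castSucc)‖) (Finset.mem_univ i)
  · exact fun i => (hP_proj _ (hpos _)).1.sub (hP_proj _ (hpos _)).1
  · intro i
    simp only [mul_sub, sub_mul, hPm1 _ _ le_rfl, hPm1 _ _ (hcs i), hPm2 _ _ (hcs i)]
    abel
  · intro i j hij
    rcases lt_or_gt_of_ne hij with h | h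
    · have h1 : i.succ ≤ j.castSucc := by
        simp only [Fin.le_def, Fin.lt_def, Fin.val_succ, Fin.val_castSucc] at *; omega
      simp only [mul_sub, sub_mul, hPm1 _ _ h1, hPm1 _ _ (h1.trans (hcs j)),
        hPm1 _ _ ((hcs i).trans h1), hPm1 _ _ (((hcs i).trans h1).trans (hcs j))]
      abel
    · have h1 : j.succ ≤ i.castSucc := by
        simp only [Fin.le_def, Fin.lt_def, Fin.val_succ, Fin.val_castSucc] at *; omega
      simp only [mul_sub, sub_mul, hPm2 _ _ h1, hPm2 _ _ (h1.trans (hcs i)),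
        hPm2 _ _ ((hcs j).trans h1), hPm2 _ _ (((hcs j).trans h1).trans (hcs i))]
      abel
  · intro i
    have h1 : f (t i.castSucc) * P (t i.succ) = P (t i.succ) * f (t i.castSucc) :=
      hf_adapted _ _ (hpos _) (hle i)
    have h2 : f (t i.castSucc) * P (t i.castSucc) = P (t i.castSucc) * f (t i.castSucc) :=
      hf_adapted _ _ (hpos _) le_rfl
    simp only [mul_sub, sub_mul, h1, h2]
end

section
/- Let (P_t)_{t≥0} be an increasing family of orthogonal projections on H and let f : [0,∞) → B(H) be hermitian, increasing, and adapted-commuting with respect to (P_t). Fix an interval [a,b] ⊆ [0,∞). Then there exists a bounded self-adjoint operator T on H with ‖T‖ ≤ max{‖f(a)‖, ‖f(b)‖} such that σ_θ ≤ T for every partition θ of [a,b], and for every ξ ∈ H the net (σ_θ ξ), indexed by the partitions of [a,b] directed by refinement, converges in norm to T ξ (i.e. σ_θ → T in the strong operator topology along refinement). -/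
section helpers

variable {H : Type*} [NormedAddCommGroup H] [InnerProductSpace ℂ H] [CompleteSpace H]

/-- The standing hypotheses on the projections and the integrand. -/
structure Adm (P f : ℝ → H →L[ℂ] H) : Prop where
  sa : ∀ s, 0 ≤ s → IsSelfAdjoint (P s)
  mono : ∀ s u, 0 ≤ s → s ≤ u → P s * P u = P s ∧ P u * P s = P s
  herm : ∀ s, 0 ≤ s → IsSelfAdjoint (f s)
  incr : ∀ u v, 0 ≤ u → u ≤ v → f u ≤ f v
  comm : ∀ s u, 0 ≤ s → s ≤ u → Commute (f s) (P u)

lemma Adm.nonneg {P f : ℝ → H →L[ℂ] H} (h : Adm P f) {x y : ℝ} (hx : 0 ≤ x) (hxy : x ≤ y) :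
    0 ≤ P y - P x := by
  have h1 : P y - P x = star (P y - P x) * (P y - P x) := by
    rw [star_sub, h.sa x hx, h.sa y (hx.trans hxy), mul_sub, sub_mul, sub_mul,
      (h.mono x y hx hxy).1, (h.mono x y hx hxy).2, (h.mono x x hx le_rfl).1,
      (h.mono y y (hx.trans hxy) le_rfl).1]
    abel
  rw [h1]
  exact star_mul_self_nonneg _

lemma mul_le_of_comm {A B Q : H →L[ℂ] H} (hQ : 0 ≤ Q) (hAB : A ≤ B) (hA : Commute A Q)
    (hB : Commute B Q) : A * Q ≤ B * Q := by
  have := Commute.mul_nonneg (sub_nonneg.2 hAB) hQ (hB.sub_left hA)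
  rw [sub_mul] at this
  exact sub_nonneg.1 this

lemma Adm.comm_sub {P f : ℝ → H →L[ℂ] H} (h : Adm P f) {u x y : ℝ} (hu : 0 ≤ u) (hux : u ≤ x)
    (hxy : x ≤ y) : Commute (f u) (P y - P x) :=
  (h.comm u y hu (hux.trans hxy)).sub_right (h.comm u x hu hux)

/-- Step sum with current value `f u`, current position `x`, remaining points `l`, and endpoint `b`. -/
noncomputable def stepSum (f P : ℝ → H →L[ℂ] H) (b : ℝ) : ℝ → ℝ → List ℝ → H →L[ℂ] H
  | u, x, [] => f u * (P b - P x)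
  | u, x, y :: l => f u * (P y - P x) + stepSum f P b y y l

lemma stepSum_split (f P : ℝ → H →L[ℂ] H) (b u x y : ℝ) (l : List ℝ) :
    stepSum f P b u x l = f u * (P y - P x) + stepSum f P b u y l := by
  cases l <;> simp only [stepSum, mul_sub] <;> abel

lemma stepSum_le_left {P f : ℝ → H →L[ℂ] H} (h : Adm P f) {b u x : ℝ} (hu : 0 ≤ u) (hux : u ≤ x)
    (l : List ℝ) (hl : ∀ y ∈ l, x ≤ y) (hb : x ≤ b) :
    stepSum f P b u x l ≤ stepSum f P b x x l := by
  have hx := hu.trans hux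
  cases l with
  | nil =>
    exact mul_le_of_comm (h.nonneg hx hb) (h.incr _ _ hu hux) (h.comm_sub hu hux hb)
      (h.comm_sub hx le_rfl hb)
  | cons y l =>
    have hy : x ≤ y := hl y (by simp)
    simp only [stepSum]
    gcongr
    exact mul_le_of_comm (h.nonneg hx hy) (h.incr _ _ hu hux) (h.comm_sub hu hux hy)
      (h.comm_sub hx le_rfl hy)

lemma stepSum_mono {P f : ℝ → H →L[ℂ] H} (h : Adm P f) {b : ℝ} {l' l : List ℝ} (hs : l'.Sublist l) :
    ∀ {u x : ℝ}, 0 ≤ u → u ≤ x → (x :: l).Pairwise (· ≤ ·) → (∀ y ∈ x :: l, y ≤ b) →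
    stepSum f P b u x l' ≤ stepSum f P b x x l := by
  induction hs with
  | slnil =>
    intro u x hu hux _ hb
    exact stepSum_le_left h hu hux [] (by simp) (hb x (by simp))
  | @cons l₁ l₂ y hs ih =>
    intro u x hu hux hp hb
    have hxy : x ≤ y := (List.pairwise_cons.1 hp).1 y (by simp)
    have hx := hu.trans hux
    rw [stepSum_split f P b u x y]
    simp only [stepSum]
    refine add_le_add ?_ (ih hu (hux.trans hxy) (List.pairwise_cons.1 hp).2
      fun z hz => hb z (List.mem_cons_of_mem _ hz))
    exact mul_le_of_comm (h.nonneg hx hxy) (h.incr _ _ hu hux) (h.comm_sub hu hux hxy)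
      (h.comm_sub hx le_rfl hxy)
  | @cons_cons l₁ l₂ y hs ih =>
    intro u x hu hux hp hb
    have hxy : x ≤ y := (List.pairwise_cons.1 hp).1 y (by simp)
    have hx := hu.trans hux
    simp only [stepSum]
    refine add_le_add ?_ (ih (hx.trans hxy) le_rfl (List.pairwise_cons.1 hp).2
      fun z hz => hb z (List.mem_cons_of_mem _ hz))
    exact mul_le_of_comm (h.nonneg hx hxy) (h.incr _ _ hu hux) (h.comm_sub hu hux hxy)
      (h.comm_sub hx le_rfl hxy)

lemma stepSum_bound {P f : ℝ → H →L[ℂ] H} (h : Adm P f) {b : ℝ} {C : H →L[ℂ] H}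
    (hC : ∀ X, Commute C X) (l : List ℝ) : ∀ {u x : ℝ}, 0 ≤ u → u ≤ x →
    (x :: l).Pairwise (· ≤ ·) → (∀ y ∈ x :: l, y ≤ b) →
    ((f b ≤ C) → stepSum f P b u x l ≤ C * (P b - P x)) ∧
    ((C ≤ f u) → C * (P b - P x) ≤ stepSum f P b u x l) := by
  induction l with
  | nil =>
    intro u x hu hux _ hb
    have hxb := hb x (by simp)
    have hx := hu.trans hux
    exact ⟨fun hfC => mul_le_of_comm (h.nonneg hx hxb) ((h.incr _ _ hu (hux.trans hxb)).trans hfC)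
      (h.comm_sub hu hux hxb) (hC _), fun hfC => mul_le_of_comm (h.nonneg hx hxb) hfC (hC _)
      (h.comm_sub hu hux hxb)⟩
  | cons y l ih =>
    intro u x hu hux hp hb
    have hxb := hb x (by simp)
    have hx := hu.trans hux
    have hxy : x ≤ y := (List.pairwise_cons.1 hp).1 y (by simp)
    have key := ih (hx.trans hxy) le_rfl (List.pairwise_cons.1 hp).2
      fun z hz => hb z (List.mem_cons_of_mem _ hz)
    have e : C * (P b - P x) = C * (P y - P x) + C * (P b - P y) := by
      simp only [mul_sub]; abel
    rw [e]
    simp only [stepSum]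
    exact ⟨fun hfC => add_le_add (mul_le_of_comm (h.nonneg hx hxy)
      ((h.incr _ _ hu (hux.trans hxb)).trans hfC)
      (h.comm_sub hu hux hxy) (hC _)) (key.1 hfC), fun hfC => add_le_add
      (mul_le_of_comm (h.nonneg hx hxy) hfC (hC _) (h.comm_sub hu hux hxy))
      (key.2 (hfC.trans (h.incr _ _ hu (hux.trans hxy))))⟩

lemma stepSum_eq (f P : ℝ → H →L[ℂ] H) {b : ℝ} (l : List ℝ) : ∀ {x : ℝ},
    (x :: l).Pairwise (· ≤ ·) → (∀ y ∈ x :: l, y ≤ b) → b ∈ x :: l →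
    (((x :: l).zip l).map (fun p => f p.1 ∘L (P p.2 - P p.1))).sum = stepSum f P b x x l := by
  induction l with
  | nil =>
    intro x _ _ hb
    have : b = x := by simpa using hb
    simp [stepSum, this]
  | cons y l ih =>
    intro x hp hle hb
    have hp' := List.pairwise_cons.1 hp
    have hb' : b ∈ y :: l := by
      rcases List.mem_cons.1 hb with rfl | hb
      · have h1 := hp'.1 y (by simp)
        have h2 := hle y (by simp)
        rw [le_antisymm h1 h2]; simp
      · exact hb
    have := ih hp'.2 (fun z hz => hle z (List.mem_cons_of_mem _ hz)) hb'
    rw [List.zip_cons_cons, List.map_cons, List.sum_cons, this]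
    rfl

lemma sort_eq_cons {a b : ℝ} {θ : Finset ℝ} (hθ : IsPartitionOf a b θ) :
    ∃ l, θ.sort (· ≤ ·) = a :: l ∧ (a :: l).Pairwise (· ≤ ·) ∧ (a :: l).Nodup ∧
      ∀ x, x ∈ a :: l ↔ x ∈ θ := by
  have hs := θ.pairwise_sort (· ≤ ·)
  have hn := θ.sort_nodup (· ≤ ·)
  have hm : ∀ x, x ∈ θ.sort (· ≤ ·) ↔ x ∈ θ := fun x => Finset.mem_sort _
  generalize θ.sort (· ≤ ·) = L at hs hn hm
  cases L with
  | nil => exact absurd ((hm a).2 hθ.1) (by simp)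
  | cons x l =>
    have : x = a := by
      refine le_antisymm ?_ (hθ.2.2 x ((hm x).1 (by simp))).1
      rcases List.mem_cons.1 ((hm a).2 hθ.1) with h | h
      · exact h.ge
      · exact (List.pairwise_cons.1 hs).1 a h
    subst this
    exact ⟨l, rfl, hs, hn, hm⟩

lemma sigmaSum_eq (f P : ℝ → H →L[ℂ] H) {a b : ℝ} {θ : Finset ℝ} (hθ : IsPartitionOf a b θ)
    {l : List ℝ} (hl : θ.sort (· ≤ ·) = a :: l) (hp : (a :: l).Pairwise (· ≤ ·))
    (hm : ∀ x, x ∈ a :: l ↔ x ∈ θ) : sigmaSum f P θ = stepSum f P b a a l := by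
  unfold sigmaSum
  rw [hl]
  exact stepSum_eq f P l hp (fun y hy => (hθ.2.2 y ((hm y).1 hy)).2) ((hm b).2 hθ.2.1)

lemma sigmaSum_mono {P f : ℝ → H →L[ℂ] H} (h : Adm P f) {a b : ℝ} (ha : 0 ≤ a)
    {θ θ' : Finset ℝ} (hθ : IsPartitionOf a b θ) (hθ' : IsPartitionOf a b θ') (hs : θ ⊆ θ') :
    sigmaSum f P θ ≤ sigmaSum f P θ' := by
  obtain ⟨l, e, hp, hn, hm⟩ := sort_eq_cons hθ
  obtain ⟨l', e', hp', hn', hm'⟩ := sort_eq_cons hθ'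
  rw [sigmaSum_eq f P hθ e hp hm, sigmaSum_eq f P hθ' e' hp' hm']
  have hsub : (a :: l).Sublist (a :: l') :=
    List.sublist_of_subperm_of_pairwise
      (List.subperm_of_subset hn fun x hx => (hm' x).2 (hs ((hm x).1 hx))) hp hp'
  exact stepSum_mono h (List.cons_sublist_cons.1 hsub) ha le_rfl hp'
    (fun y hy => (hθ'.2.2 y ((hm' y).1 hy)).2)

lemma norm_apply_le_of_bounds {A C : H →L[ℂ] H} {M : ℝ} (hM : 0 ≤ M)
    (hC : C = algebraMap ℝ (H →L[ℂ] H) M) (h1 : -C ≤ A) (h2 : A ≤ C) : ‖A‖ ≤ M := by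
  have hc : Commute C A := by rw [hC]; exact Algebra.commutes M A
  have hsa : IsSelfAdjoint A := by
    have h3 : IsSelfAdjoint (C - A) := (IsSelfAdjoint.of_nonneg (sub_nonneg.2 h2))
    have h4 : IsSelfAdjoint C := by rw [hC]; exact IsSelfAdjoint.algebraMap _ (.all M)
    simpa using h4.sub h3
  have h5 : 0 ≤ (C - A) * (C + A) := by
    refine Commute.mul_nonneg (sub_nonneg.2 h2) (by simpa [add_comm] using sub_nonneg.2 h1) ?_
    exact ((Commute.refl C).add_right hc).sub_left (hc.symm.add_right (Commute.refl A))
  refine ContinuousLinearMap.opNorm_le_bound _ hM fun ξ => ?_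
  have h6 := ((ContinuousLinearMap.nonneg_iff_isPositive _).1 h5).re_inner_nonneg_left ξ
  have h7 : (C - A) * (C + A) = C * C - A * A := by
    rw [sub_mul, mul_add, mul_add, hc.eq]; abel
  have h8 : C ξ = M • ξ := by rw [hC, Algebra.algebraMap_eq_smul_one]; rfl
  have h9 : inner ℂ (A (A ξ)) ξ = inner ℂ (A ξ) (A ξ) :=
    hsa.isSymmetric (A ξ) ξ
  have h10 : (C * C - A * A) ξ = (M * M) • ξ - A (A ξ) := by
    have : C (C ξ) = (M * M) • ξ := by
      rw [h8, hC, Algebra.algebraMap_eq_smul_one, mul_smul]; rfl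
    rw [← this]; rfl
  have h11 : RCLike.re (inner ℂ ((M * M) • ξ) ξ) = (M * ‖ξ‖) ^ 2 := by
    rw [inner_smul_left_eq_smul, RCLike.smul_re, inner_self_eq_norm_sq (𝕜 := ℂ)]
    ring
  rw [h7, h10, inner_sub_left, h9, map_sub, h11, inner_self_eq_norm_sq (𝕜 := ℂ)] at h6
  exact (abs_le_of_sq_le_sq' (sub_nonneg.1 h6) (by positivity)).2

lemma norm_sq_le_of_nonneg {D : H →L[ℂ] H} (hD : 0 ≤ D) (ξ : H) :
    ‖D ξ‖ ^ 2 ≤ ‖D‖ * RCLike.re (inner ℂ (D ξ) ξ) := by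
  have h1 : CFC.sqrt D * CFC.sqrt D = D := CFC.sqrt_mul_sqrt_self D hD
  have h2 : ‖CFC.sqrt D‖ = √‖D‖ := CFC.norm_sqrt D hD
  have hsa : IsSelfAdjoint (CFC.sqrt D) := IsSelfAdjoint.of_nonneg (CFC.sqrt_nonneg D)
  generalize CFC.sqrt D = R at h1 h2 hsa
  have h3 : D ξ = R (R ξ) := by rw [← h1]; rfl
  have h4 : inner ℂ (R (R ξ)) ξ = inner ℂ (R ξ) (R ξ) := hsa.isSymmetric (R ξ) ξ
  have h5 : RCLike.re (inner ℂ (D ξ) ξ) = ‖R ξ‖ ^ 2 := by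
    rw [h3, h4]; exact inner_self_eq_norm_sq (𝕜 := ℂ) _
  rw [h5, h3]
  calc ‖R (R ξ)‖ ^ 2 ≤ (‖R‖ * ‖R ξ‖) ^ 2 := by gcongr; exact R.le_opNorm _
    _ = ‖D‖ * ‖R ξ‖ ^ 2 := by rw [mul_pow, h2, Real.sq_sqrt (norm_nonneg _)]

lemma sigmaSum_norm {P f : ℝ → H →L[ℂ] H} (h : Adm P f) {a b : ℝ} (ha : 0 ≤ a) (hab : a ≤ b)
    {θ : Finset ℝ} (hθ : IsPartitionOf a b θ) : ‖sigmaSum f P θ‖ ≤ max ‖f a‖ ‖f b‖ := by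
  obtain ⟨l, e, hp, hn, hm⟩ := sort_eq_cons hθ
  rw [sigmaSum_eq f P hθ e hp hm]
  set M := max ‖f a‖ ‖f b‖ with hMdef
  have hM : 0 ≤ M := (norm_nonneg _).trans (le_max_left _ _)
  set C := algebraMap ℝ (H →L[ℂ] H) M with hC
  have hcomm : ∀ X, Commute C X := fun X => Algebra.commutes M X
  have hb := h.herm b (ha.trans hab)
  have hmono : ∀ r : ℝ, r ≤ M → algebraMap ℝ (H →L[ℂ] H) r ≤ C := fun r hr => by
    rw [hC]; exact algebraMap_mono _ hr
  have h1 : f b ≤ C := (hb.le_algebraMap_norm_self).trans (hmono _ (le_max_right _ _))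
  have h2 : -C ≤ f a := (neg_le_neg (hmono _ (le_max_left _ _))).trans
    ((h.herm a ha).neg_algebraMap_norm_le_self)
  have hle : ∀ y ∈ a :: l, y ≤ b := fun y hy => (hθ.2.2 y ((hm y).1 hy)).2
  have k1 := (stepSum_bound h hcomm l ha le_rfl hp hle).1 h1
  have k2 := (stepSum_bound h (C := -C) (fun X => (hcomm X).neg_left) l ha le_rfl hp hle).2 h2
  have hC0 : 0 ≤ C := by simpa using hmono 0 hM
  have hQ : C * (P b - P a) ≤ C := by
    have h3 : 0 ≤ 1 - (P b - P a) := by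
      have : 1 - (P b - P a) = star (1 - (P b - P a)) * (1 - (P b - P a)) := by
        have hq : (P b - P a) * (P b - P a) = P b - P a := by
          rw [mul_sub, sub_mul, sub_mul,
            (h.mono a b ha hab).1, (h.mono a b ha hab).2, (h.mono a a ha le_rfl).1,
            (h.mono b b (ha.trans hab) le_rfl).1]
          abel
        rw [star_sub, star_one, star_sub, h.sa a ha, h.sa b (ha.trans hab)]
        generalize P b - P a = Q at hq
        rw [mul_sub, sub_mul, sub_mul, hq, mul_one, one_mul, mul_one]
        abel
      rw [this]
      exact star_mul_self_nonneg _
    have := Commute.mul_nonneg hC0 h3 (hcomm _)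
    rw [mul_sub, mul_one] at this
    exact sub_nonneg.1 this
  refine norm_apply_le_of_bounds hM hC ?_ (k1.trans hQ)
  refine le_trans ?_ k2
  rw [neg_mul]
  exact neg_le_neg hQ

lemma stepSum_sa {P f : ℝ → H →L[ℂ] H} (h : Adm P f) {b : ℝ} (l : List ℝ) :
    ∀ {u x : ℝ}, 0 ≤ u → u ≤ x → (x :: l).Pairwise (· ≤ ·) → (∀ y ∈ x :: l, y ≤ b) →
    IsSelfAdjoint (stepSum f P b u x l) := by
  have key : ∀ {u x y : ℝ}, 0 ≤ u → u ≤ x → x ≤ y → IsSelfAdjoint (f u * (P y - P x)) := by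
    intro u x y hu hux hxy
    exact ((h.herm u hu).commute_iff (IsSelfAdjoint.of_nonneg
      (h.nonneg (hu.trans hux) hxy))).1 (h.comm_sub hu hux hxy)
  induction l with
  | nil =>
    intro u x hu hux _ hb
    exact key hu hux (hb x (by simp))
  | cons y l ih =>
    intro u x hu hux hp hb
    have hxy : x ≤ y := (List.pairwise_cons.1 hp).1 y (by simp)
    exact (key hu hux hxy).add (ih ((hu.trans hux).trans hxy) le_rfl (List.pairwise_cons.1 hp).2
      fun z hz => hb z (List.mem_cons_of_mem _ hz))

end helpers


/-- For increasing projections (P_t) and hermitian, increasing,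
adapted-commuting f, there is a bounded self-adjoint operator T with
‖T‖ ≤ max{‖f(a)‖, ‖f(b)‖} such that σ_θ ≤ T for every partition θ of [a,b], and
σ_θ → T in the strong operator topology along the net of partitions directed by
refinement. -/
theorem sigma_net_converges_strongly
    {H : Type*} [NormedAddCommGroup H] [InnerProductSpace ℂ H] [CompleteSpace H]
    (a b : ℝ) (ha : 0 ≤ a) (hab : a < b)
    (P : ℝ → H →L[ℂ] H)
    (hP_proj : ∀ s, 0 ≤ s → IsSelfAdjoint (P s) ∧ P s ∘L P s = P s)
    (hP_mono : ∀ s u, 0 ≤ s → s ≤ u → P s ∘L P u = P s ∧ P u ∘L P s = P s)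
    (f : ℝ → H →L[ℂ] H)
    (hf_herm : ∀ s, 0 ≤ s → IsSelfAdjoint (f s))
    (hf_incr : ∀ u v, 0 ≤ u → u ≤ v → (f v - f u).IsPositive)
    (hf_adapted : ∀ s u, 0 ≤ s → s ≤ u → f s ∘L P u = P u ∘L f s) :
    ∃ T : H →L[ℂ] H, IsSelfAdjoint T ∧ ‖T‖ ≤ max ‖f a‖ ‖f b‖ ∧
      (∀ θ : Finset ℝ, IsPartitionOf a b θ → (T - sigmaSum f P θ).IsPositive) ∧
      (∀ ξ : H, ∀ ε > (0 : ℝ), ∃ θ₀ : Finset ℝ, IsPartitionOf a b θ₀ ∧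
        ∀ θ : Finset ℝ, IsPartitionOf a b θ → θ₀ ⊆ θ →
          ‖sigmaSum f P θ ξ - T ξ‖ < ε) := by
  have h : Adm P f := ⟨fun s hs => (hP_proj s hs).1, hP_mono, hf_herm, hf_incr, hf_adapted⟩
  set M := max ‖f a‖ ‖f b‖ with hMdef
  have hM : 0 ≤ M := (norm_nonneg _).trans (le_max_left _ _)
  let : SemilatticeSup {θ : Finset ℝ // IsPartitionOf a b θ} :=
    Subtype.semilatticeSup (fun x y hx hy => ⟨Finset.mem_union_left _ hx.1,
      Finset.mem_union_left _ hx.2.1, fun z hz => (Finset.mem_union.1 hz).elim (hx.2.2 z)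
        (hy.2.2 z)⟩)
  have : Nonempty {θ : Finset ℝ // IsPartitionOf a b θ} :=
    ⟨⟨{a, b}, by simp, by simp, by simp [hab.le]⟩⟩
  let g : {θ : Finset ℝ // IsPartitionOf a b θ} → (H →L[ℂ] H) := fun i => sigmaSum f P i.1
  have hg_mono : Monotone g := fun i j hij => sigmaSum_mono h ha i.2 j.2 hij
  have hg_norm : ∀ i, ‖g i‖ ≤ M := fun i => sigmaSum_norm h ha hab.le i.2
  have hcauchy : ∀ ξ, CauchySeq (fun i => g i ξ) := by
    intro ξ
    let r := fun i => RCLike.re (inner ℂ (g i ξ) ξ)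
    have hr_mono : Monotone r := fun i j hij => by
      have := ((ContinuousLinearMap.le_def _ _).1 (hg_mono hij)).re_inner_nonneg_left ξ
      rw [sub_apply, inner_sub_left, map_sub] at this
      exact sub_nonneg.1 this
    have hr_bdd : BddAbove (Set.range r) := by
      refine ⟨M * ‖ξ‖ * ‖ξ‖, ?_⟩
      rintro _ ⟨i, rfl⟩
      calc r i ≤ ‖inner ℂ (g i ξ) ξ‖ := RCLike.re_le_norm _
        _ ≤ ‖g i ξ‖ * ‖ξ‖ := norm_inner_le_norm _ _
        _ ≤ M * ‖ξ‖ * ‖ξ‖ := by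
          gcongr
          exact (g i).le_of_opNorm_le (hg_norm i) ξ
    rw [Metric.cauchySeq_iff']
    intro ε hε
    have hδ : 0 < ε ^ 2 / (2 * M + 1) := by positivity
    obtain ⟨N, hN⟩ := exists_lt_of_lt_ciSup (sub_lt_self (⨆ i, r i) hδ)
    refine ⟨N, fun n hn => ?_⟩
    have h1 := norm_sq_le_of_nonneg (sub_nonneg.2 (hg_mono hn)) ξ
    have h2 : ‖g n - g N‖ ≤ 2 * M + 1 := by
      have := norm_sub_le (g n) (g N)
      linarith [hg_norm n, hg_norm N]
    rw [sub_apply, inner_sub_left, map_sub] at h1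
    have h3 : r n - r N < ε ^ 2 / (2 * M + 1) := by
      have := le_ciSup hr_bdd n
      linarith
    have h4 : 0 ≤ r n - r N := sub_nonneg.2 (hr_mono hn)
    rw [dist_eq_norm]
    refine lt_of_pow_lt_pow_left₀ 2 hε.le ?_
    calc ‖g n ξ - g N ξ‖ ^ 2 ≤ ‖g n - g N‖ * (r n - r N) := h1
      _ ≤ (2 * M + 1) * (r n - r N) := by gcongr
      _ < (2 * M + 1) * (ε ^ 2 / (2 * M + 1)) := by gcongr
      _ = ε ^ 2 := by field_simp
  choose F hF using fun ξ => cauchySeq_tendsto_of_complete (hcauchy ξ)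
  let T : H →L[ℂ] H := ContinuousLinearMap.ofTendstoOfBoundedRange (l := Filter.atTop) F g
    (tendsto_pi_nhds.2 hF) (isBounded_iff_forall_norm_le.2 ⟨M, by
      rintro _ ⟨i, rfl⟩; exact hg_norm i⟩)
  have hT : ∀ ξ, Filter.Tendsto (fun i => g i ξ) Filter.atTop (nhds (T ξ)) := hF
  open scoped ComplexOrder in
  have hpos : ∀ j, (T - g j).IsPositive := by
    intro j
    rw [ContinuousLinearMap.isPositive_iff_complex]
    intro x
    have hlim : Filter.Tendsto (fun i => inner ℂ ((g i - g j) x) x) Filter.atTop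
        (nhds (inner ℂ ((T - g j) x) x)) :=
      (((hT x).sub_const (g j x))).inner tendsto_const_nhds
    have hev : ∀ᶠ i in Filter.atTop, (0 : ℂ) ≤ inner ℂ ((g i - g j) x) x := by
      filter_upwards [Filter.eventually_ge_atTop j] with i hi
      exact ((ContinuousLinearMap.le_def _ _).1 (hg_mono hi)).inner_nonneg_left x
    have h0 : (0 : ℂ) ≤ inner ℂ ((T - g j) x) x := ge_of_tendsto hlim hev
    obtain ⟨h1, h2⟩ := Complex.nonneg_iff.1 h0
    exact ⟨Complex.ext (by simp) (by simpa [inner_sub_left] using h2), h1⟩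
  have hgsa : ∀ i, IsSelfAdjoint (g i) := by
    intro i
    obtain ⟨l, e, hp, hn, hm⟩ := sort_eq_cons i.2
    have : g i = stepSum f P b a a l := sigmaSum_eq f P i.2 e hp hm
    rw [this]
    exact stepSum_sa h l ha le_rfl hp (fun y hy => (i.2.2.2 y ((hm y).1 hy)).2)
  refine ⟨T, ?_, ?_, fun θ hθ => hpos ⟨θ, hθ⟩, ?_⟩
  · obtain ⟨j⟩ := ‹Nonempty {θ : Finset ℝ // IsPartitionOf a b θ}›
    have := (hpos j).isSelfAdjoint.add (hgsa j)
    simpa using this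
  · refine ContinuousLinearMap.opNorm_le_bound _ hM fun ξ => ?_
    exact le_of_tendsto (hT ξ).norm (Filter.Eventually.of_forall fun i =>
      (g i).le_of_opNorm_le (hg_norm i) ξ)
  · intro ξ ε hε
    obtain ⟨N, hN⟩ := (Metric.tendsto_atTop.1 (hT ξ)) ε hε
    refine ⟨N.1, N.2, fun θ hθ hs => ?_⟩
    have := hN ⟨θ, hθ⟩ hs
    rwa [dist_eq_norm] at this
end

section
/- Let (P_t)_{t≥0} be an increasing family of orthogonal projections on H, let f : [0,∞) → B(H) be adapted-commuting with respect to (P_t), let ξ ∈ H, and let ε, δ > 0 be such that ‖f(u) − f(v)‖ ≤ ε/(2‖ξ‖) whenever u, v ∈ [a,b] and |u − v| ≤ δ. Then for any two partitions θ₁, θ₂ of [a,b] both of mesh less than δ, one has ‖σ_{θ₁} ξ − σ_{θ₂} ξ‖ ≤ ε. -/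
/-- `meshOf θ` is the mesh max_{1≤k≤m}(t_k − t_{k−1}) of the partition θ. -/
noncomputable def meshOf (θ : Finset ℝ) : ℝ :=
  (((θ.sort (· ≤ ·)).zip (θ.sort (· ≤ ·)).tail).map (fun p => p.2 - p.1)).foldr max 0


noncomputable def sSum {H : Type*} [NormedAddCommGroup H] [InnerProductSpace ℂ H]
    (h P : ℝ → H →L[ℂ] H) : List ℝ → H →L[ℂ] H
  | [] => 0
  | [_] => 0
  | s :: t :: L => h s ∘L (P t - P s) + sSum h P (t :: L)

section helpers
variable {H : Type*} [NormedAddCommGroup H] [InnerProductSpace ℂ H]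

lemma sSum_eq (h P : ℝ → H →L[ℂ] H) (L : List ℝ) :
    ((L.zip L.tail).map (fun p => h p.1 ∘L (P p.2 - P p.1))).sum = sSum h P L := by
  induction L with
  | nil => simp [sSum]
  | cons s L ih =>
    cases L with
    | nil => simp [sSum]
    | cons t L => simpa [sSum] using ih

lemma sSum_congr (h k P : ℝ → H →L[ℂ] H) (L : List ℝ) (e : ∀ x ∈ L, h x = k x) :
    sSum h P L = sSum k P L := by
  induction L with
  | nil => simp [sSum]
  | cons s L ih =>
    cases L with
    | nil => simp [sSum]
    | cons t L =>
      have h1 := ih (fun x hx => e x (List.mem_cons_of_mem _ hx))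
      have h2 := e s (by simp)
      simp only [sSum, h1, h2]

lemma sSum_sub (h k P : ℝ → H →L[ℂ] H) (L : List ℝ) :
    sSum h P L - sSum k P L = sSum (fun x => h x - k x) P L := by
  induction L with
  | nil => simp [sSum]
  | cons s L ih =>
    cases L with
    | nil => simp [sSum]
    | cons t L =>
      simp only [sSum, ← ih, ContinuousLinearMap.sub_comp]
      abel

lemma sSum_insert (h P : ℝ → H →L[ℂ] H) (x : ℝ) (L : List ℝ) :
    ∀ c, (c :: L).Pairwise (· < ·) → c < x → (∃ y ∈ c :: L, x < y) → x ∉ c :: L →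
    (∀ p ∈ c :: L, p < x → (∀ q ∈ c :: L, q < x → q ≤ p) → h p = h x) →
    sSum h P ((c :: L).orderedInsert (· ≤ ·) x) = sSum h P (c :: L) := by
  induction L with
  | nil =>
    rintro c - hc ⟨y, hy, hxy⟩
    simp at hy
    subst hy
    exact absurd hc hxy.not_gt
  | cons d L ih =>
    intro c hs hc hy hx hh
    rw [List.orderedInsert_cons, if_neg (not_le.2 hc)]
    rw [List.pairwise_cons] at hs
    obtain ⟨hcd, hs⟩ := hs
    have hxd : x ≠ d := fun e => hx (by simp [e])
    rcases lt_or_gt_of_ne hxd with hlt | hlt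
    · rw [List.orderedInsert_cons, if_pos hlt.le]
      have e : h c = h x := by
        apply hh c (by simp) hc
        intro q hq hqx
        rcases List.mem_cons.1 hq with rfl | hq
        · exact le_rfl
        rcases List.mem_cons.1 hq with rfl | hq
        · exact absurd hqx hlt.not_gt
        · exact absurd (hqx.trans hlt) ((List.pairwise_cons.1 hs).1 q hq).not_gt
      simp only [sSum, e, ContinuousLinearMap.comp_sub]
      abel
    · have := ih d hs hlt ?_ (fun h' => hx (List.mem_cons_of_mem _ h')) ?_
      · rw [List.orderedInsert_cons, if_neg (not_le.2 hlt)] at this ⊢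
        simp only [sSum]
        rw [this]
      · obtain ⟨y, hy, hxy⟩ := hy
        rcases List.mem_cons.1 hy with rfl | hy
        · exact absurd hc hxy.not_gt
        · exact ⟨y, hy, hxy⟩
      · intro p hp hpx hq
        refine hh p (List.mem_cons_of_mem _ hp) hpx ?_
        intro q hq' hqx
        rcases List.mem_cons.1 hq' with rfl | hq'
        · exact (hcd p hp).le
        · exact hq q hq' hqx

lemma sort_insert_eq (x : ℝ) (θ : Finset ℝ) (hx : x ∉ θ) :
    (insert x θ).sort (· ≤ ·) = (θ.sort (· ≤ ·)).orderedInsert (· ≤ ·) x := by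
  apply List.Perm.eq_of_pairwise (le := (· ≤ ·))
  · intro a b _ _ h1 h2
    exact le_antisymm h1 h2
  · exact Finset.pairwise_sort _ _
  · exact (Finset.pairwise_sort θ (· ≤ ·)).orderedInsert x _
  · refine List.Perm.trans ?_ (List.perm_orderedInsert _ x _).symm
    rw [List.perm_ext_iff_of_nodup (Finset.sort_nodup _ _)]
    · intro y; simp
    · simp [hx]

lemma sSum_insert_finset (h P : ℝ → H →L[ℂ] H) (a b x : ℝ) (θ : Finset ℝ)
    (hθ : IsPartitionOf a b θ) (hx : x ∈ Set.Icc a b) (hxθ : x ∉ θ)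
    (hh : ∀ p ∈ θ, p < x → (∀ q ∈ θ, q < x → q ≤ p) → h p = h x) :
    sSum h P ((insert x θ).sort (· ≤ ·)) = sSum h P (θ.sort (· ≤ ·)) := by
  rw [sort_insert_eq x θ hxθ]
  obtain ⟨h1, h2, h3⟩ := hθ
  have hs : (θ.sort (· ≤ ·)).Pairwise (· < ·) := (Finset.sortedLT_sort θ).pairwise
  have hm : ∀ y, y ∈ θ.sort (· ≤ ·) ↔ y ∈ θ := fun y => Finset.mem_sort _
  generalize θ.sort (· ≤ ·) = L at hs hm
  cases L with
  | nil => exact absurd ((hm a).2 h1) (by simp)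
  | cons c L =>
    have hca : c ≤ a := by
      rcases List.mem_cons.1 ((hm a).2 h1) with rfl | h'
      · exact le_rfl
      · exact ((List.pairwise_cons.1 hs).1 a h').le
    have hcθ : c ∈ θ := (hm c).1 (by simp)
    apply sSum_insert h P x L c hs
    · exact lt_of_le_of_ne (hca.trans hx.1) (fun e => hxθ (e ▸ hcθ))
    · exact ⟨b, (hm b).2 h2, lt_of_le_of_ne hx.2 (fun e => hxθ (e ▸ h2))⟩
    · exact fun h' => hxθ ((hm x).1 h')
    · intro p hp hpx hq
      exact hh p ((hm p).1 hp) hpx (fun q hq' => hq q ((hm q).2 hq'))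

lemma sSum_union (f P : ℝ → H →L[ℂ] H) (a b : ℝ) (θ η : Finset ℝ) (g : ℝ → ℝ)
    (hθ : IsPartitionOf a b θ) (hη : ∀ x ∈ η, x ∈ Set.Icc a b)
    (hg : ∀ x ∈ Set.Icc a b, g x ∈ θ ∧ g x ≤ x ∧ ∀ q ∈ θ, q ≤ x → q ≤ g x) :
    sSum f P (θ.sort (· ≤ ·)) = sSum (fun x => f (g x)) P ((η ∪ θ).sort (· ≤ ·)) := by
  induction η using Finset.induction_on with
  | empty =>
    rw [Finset.empty_union]
    apply sSum_congr
    intro x hx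
    rw [Finset.mem_sort] at hx
    obtain ⟨h1, h2, h3⟩ := hg x (hθ.2.2 x hx)
    rw [le_antisymm h2 (h3 x hx le_rfl)]
  | insert x η hx ih =>
    rw [ih (fun y hy => hη y (Finset.mem_insert_of_mem hy)), Finset.insert_union]
    by_cases hxm : x ∈ η ∪ θ
    · rw [Finset.insert_eq_of_mem hxm]
    symm
    have hxI := hη x (Finset.mem_insert_self _ _)
    have hall : ∀ y ∈ η ∪ θ, y ∈ Set.Icc a b := by
      intro y hy
      rcases Finset.mem_union.1 hy with hy | hy
      · exact hη y (Finset.mem_insert_of_mem hy)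
      · exact hθ.2.2 y hy
    apply sSum_insert_finset _ P a b x _ _ hxI hxm
    · intro p hp hpx hq
      obtain ⟨a1, a2, a3⟩ := hg p (hall p hp)
      obtain ⟨b1, b2, b3⟩ := hg x hxI
      have hne : g x ≠ x := fun e => hxm (Finset.mem_union_right _ (e ▸ b1))
      have : g x ≤ p := hq _ (Finset.mem_union_right _ b1) (lt_of_le_of_ne b2 hne)
      have e : g p = g x := le_antisymm (b3 _ a1 (a2.trans hpx.le)) (a3 _ b1 this)
      simp only [e]
    · exact ⟨Finset.mem_union_right _ hθ.1, Finset.mem_union_right _ hθ.2.1, hall⟩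

lemma mesh_list (δ x : ℝ) (hδ : 0 < δ) (L : List ℝ) : ∀ c, c ≤ x → (∃ y ∈ c :: L, x ≤ y) →
    (((c :: L).zip (c :: L).tail).map (fun p => p.2 - p.1)).foldr max 0 < δ →
    ∃ p ∈ c :: L, p ≤ x ∧ x - p < δ := by
  induction L with
  | nil =>
    rintro c hc ⟨y, hy, hxy⟩ -
    simp at hy
    subst hy
    exact ⟨y, by simp, hc, by linarith⟩
  | cons d L ih =>
    intro c hc hy hm
    simp only [List.tail_cons, List.zip_cons_cons, List.map_cons, List.foldr_cons,
      max_lt_iff] at hm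
    by_cases hxc : x ≤ c
    · exact ⟨c, by simp, hc, by linarith⟩
    by_cases hd : d ≤ x
    · have hy' : ∃ y ∈ d :: L, x ≤ y := by
        obtain ⟨y, hy, hxy⟩ := hy
        rcases List.mem_cons.1 hy with rfl | hy
        · exact absurd hxy hxc
        · exact ⟨y, hy, hxy⟩
      obtain ⟨p, hp, h⟩ := ih d hd hy' (by simpa using hm.2)
      exact ⟨p, List.mem_cons_of_mem _ hp, h⟩
    · exact ⟨c, by simp, hc, by linarith [hm.1]⟩

lemma exists_left (a b δ : ℝ) (hδ : 0 < δ) (θ : Finset ℝ) (hθ : IsPartitionOf a b θ)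
    (hm : meshOf θ < δ) : ∃ g : ℝ → ℝ, ∀ x ∈ Set.Icc a b,
      (g x ∈ θ ∧ g x ≤ x ∧ ∀ q ∈ θ, q ≤ x → q ≤ g x) ∧ x - g x < δ := by
  have key : ∀ x, ∃ g, x ∈ Set.Icc a b →
      (g ∈ θ ∧ g ≤ x ∧ ∀ q ∈ θ, q ≤ x → q ≤ g) ∧ x - g < δ := by
    intro x
    by_cases hx : x ∈ Set.Icc a b
    swap
    · exact ⟨0, fun h => absurd h hx⟩
    obtain ⟨g, hg, hmax⟩ := (θ.filter (· ≤ x)).exists_max_image id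
      ⟨a, Finset.mem_filter.2 ⟨hθ.1, hx.1⟩⟩
    rw [Finset.mem_filter] at hg
    have hmax' : ∀ q ∈ θ, q ≤ x → q ≤ g :=
      fun q hq hqx => hmax q (Finset.mem_filter.2 ⟨hq, hqx⟩)
    refine ⟨g, fun _ => ⟨⟨hg.1, hg.2, hmax'⟩, ?_⟩⟩
    have hs : (θ.sort (· ≤ ·)).Pairwise (· < ·) := (Finset.sortedLT_sort θ).pairwise
    have hmm : ∀ y, y ∈ θ.sort (· ≤ ·) ↔ y ∈ θ := fun y => Finset.mem_sort _
    unfold meshOf at hm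
    generalize θ.sort (· ≤ ·) = L at hs hmm hm
    cases L with
    | nil => exact absurd ((hmm a).2 hθ.1) (by simp)
    | cons c L =>
      have hca : c ≤ a := by
        rcases List.mem_cons.1 ((hmm a).2 hθ.1) with rfl | h'
        · exact le_rfl
        · exact ((List.pairwise_cons.1 hs).1 a h').le
      obtain ⟨p, hp, hpx, hd⟩ := mesh_list δ x hδ L c (hca.trans hx.1)
        ⟨b, (hmm b).2 hθ.2.1, hx.2⟩ hm
      have := hmax' p ((hmm p).1 hp) hpx
      linarith
  choose g hg using key
  exact ⟨g, hg⟩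

lemma P_sSum (A P : ℝ → H →L[ℂ] H)
    (hP_mono : ∀ s u, 0 ≤ s → s ≤ u → P s ∘L P u = P s ∧ P u ∘L P s = P s)
    (L : List ℝ) : ∀ s, 0 ≤ s → (s :: L).Pairwise (· < ·) →
    (∀ x ∈ s :: L, ∀ u, x ≤ u → A x ∘L P u = P u ∘L A x) →
    ∀ u, 0 ≤ u → u ≤ s → ∀ ξ, P u (sSum A P (s :: L) ξ) = 0 := by
  induction L with
  | nil => intros; simp [sSum]
  | cons t L ih =>
    intro s hs0 hs hA u hu hus ξ
    have hst : s < t := (List.pairwise_cons.1 hs).1 t (by simp)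
    have h1 := ih t (hs0.trans hst.le) (List.pairwise_cons.1 hs).2
      (fun x hx => hA x (List.mem_cons_of_mem _ hx)) u hu (hus.trans hst.le) ξ
    have hc : ∀ η, A s (P s η) = P s (A s η) :=
      fun η => DFunLike.congr_fun (hA s (by simp) s le_rfl) η
    have hus' : ∀ η, P u (P s η) = P u η :=
      fun η => DFunLike.congr_fun (hP_mono u s hu hus).1 η
    have h2 : ∀ η, P s (P t η) = P s η :=
      fun η => DFunLike.congr_fun (hP_mono s t hs0 hst.le).1 η
    have h3 : ∀ η, P s (P s η) = P s η :=
      fun η => DFunLike.congr_fun (hP_mono s s hs0 le_rfl).1 η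
    simp only [sSum, ContinuousLinearMap.add_apply, ContinuousLinearMap.comp_apply, map_add, h1,
      add_zero]
    rw [← hus', ← hc]
    simp [h2, h3]

lemma norm_sSum [CompleteSpace H] (A P : ℝ → H →L[ℂ] H)
    (hP_proj : ∀ s, 0 ≤ s → IsSelfAdjoint (P s) ∧ P s ∘L P s = P s)
    (hP_mono : ∀ s u, 0 ≤ s → s ≤ u → P s ∘L P u = P s ∧ P u ∘L P s = P s)
    (C : ℝ) (hC : 0 ≤ C) (ξ : H)
    (L : List ℝ) : ∀ s, 0 ≤ s → (s :: L).Pairwise (· < ·) →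
    (∀ x ∈ s :: L, ∀ u, x ≤ u → A x ∘L P u = P u ∘L A x) →
    (∀ x ∈ s :: L, ‖A x‖ ≤ C) →
    ‖sSum A P (s :: L) ξ‖ ^ 2 ≤ C ^ 2 * (‖ξ‖ ^ 2 - ‖P s ξ‖ ^ 2) := by
  have hsym : ∀ s, 0 ≤ s → ∀ x y : H, inner ℂ (P s x) y = inner ℂ x (P s y) := fun s hs =>
    (ContinuousLinearMap.isSelfAdjoint_iff_isSymmetric.1 (hP_proj s hs).1)
  have pyth : ∀ x y : H, inner ℂ x y = 0 → ‖x + y‖ ^ 2 = ‖x‖ ^ 2 + ‖y‖ ^ 2 := by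
    intro x y h
    have := norm_add_sq_eq_norm_sq_add_norm_sq_of_inner_eq_zero x y h
    nlinarith
  induction L with
  | nil =>
    intro s hs _ _ _
    have h3 : P s (P s ξ) = P s ξ := DFunLike.congr_fun (hP_proj s hs).2 ξ
    have := pyth (P s ξ) (ξ - P s ξ) (by rw [hsym s hs]; simp [h3])
    rw [add_sub_cancel] at this
    simp only [sSum, ContinuousLinearMap.zero_apply, norm_zero]
    rw [this]
    have : 0 ≤ C ^ 2 * ‖ξ - P s ξ‖ ^ 2 := by positivity
    nlinarith
  | cons t L ih =>
    intro s hs0 hs hA hAC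
    have hst : s < t := (List.pairwise_cons.1 hs).1 t (by simp)
    have ht0 := hs0.trans hst.le
    have hA' : ∀ x ∈ t :: L, ∀ u, x ≤ u → A x ∘L P u = P u ∘L A x :=
      fun x hx => hA x (List.mem_cons_of_mem _ hx)
    have h1 := ih t ht0 (List.pairwise_cons.1 hs).2 hA'
      (fun x hx => hAC x (List.mem_cons_of_mem _ hx))
    have h0 := P_sSum A P hP_mono L t ht0 (List.pairwise_cons.1 hs).2 hA' t ht0 le_rfl ξ
    have hts : ∀ η, P t (P s η) = P s η :=
      fun η => DFunLike.congr_fun (hP_mono s t hs0 hst.le).2 η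
    have hst' : ∀ η, P s (P t η) = P s η :=
      fun η => DFunLike.congr_fun (hP_mono s t hs0 hst.le).1 η
    have htt : ∀ η, P t (P t η) = P t η := fun η => DFunLike.congr_fun (hP_proj t ht0).2 η
    have hss : ∀ η, P s (P s η) = P s η := fun η => DFunLike.congr_fun (hP_proj s hs0).2 η
    have hc : ∀ η, A s (P t η) = P t (A s η) :=
      fun η => DFunLike.congr_fun (hA s (by simp) t hst.le) η
    have hv : P t (A s (P t ξ - P s ξ)) = A s (P t ξ - P s ξ) := by
      rw [← hc, map_sub, htt, hts]
    have hn : ‖A s (P t ξ - P s ξ)‖ ≤ C * ‖P t ξ - P s ξ‖ :=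
      (A s).le_of_opNorm_le (hAC s (by simp)) _
    have hp := pyth (P s ξ) (P t ξ - P s ξ) (by rw [hsym s hs0]; simp [hst', hss])
    rw [add_sub_cancel] at hp
    have hq := pyth (A s (P t ξ - P s ξ)) (sSum A P (t :: L) ξ)
      (by rw [← hv, hsym t ht0, h0, inner_zero_right])
    have hn2 : ‖A s (P t ξ - P s ξ)‖ ^ 2 ≤ C ^ 2 * ‖P t ξ - P s ξ‖ ^ 2 := by
      rw [← mul_pow]
      gcongr
    have e : sSum A P (s :: t :: L) ξ = A s (P t ξ - P s ξ) + sSum A P (t :: L) ξ := by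
      simp [sSum]
    rw [e, hq]
    rw [hp] at h1
    nlinarith

end helpers

/-- If ‖f(u) − f(v)‖ ≤ ε/(2‖ξ‖) whenever u, v ∈ [a,b] with |u − v| ≤ δ,
then for any two partitions θ₁, θ₂ of [a,b] of mesh < δ one has
‖σ_{θ₁}ξ − σ_{θ₂}ξ‖ ≤ ε. -/
theorem sigma_cauchy_estimate
    {H : Type*} [NormedAddCommGroup H] [InnerProductSpace ℂ H] [CompleteSpace H]
    (a b : ℝ) (ha : 0 ≤ a) (hab : a < b)
    (P : ℝ → H →L[ℂ] H)
    (hP_proj : ∀ s, 0 ≤ s → IsSelfAdjoint (P s) ∧ P s ∘L P s = P s)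
    (hP_mono : ∀ s u, 0 ≤ s → s ≤ u → P s ∘L P u = P s ∧ P u ∘L P s = P s)
    (f : ℝ → H →L[ℂ] H)
    (hf_adapted : ∀ s u, 0 ≤ s → s ≤ u → f s ∘L P u = P u ∘L f s)
    (ξ : H) (ε δ : ℝ) (hε : 0 < ε) (hδ : 0 < δ)
    (hf_osc : ∀ u v, u ∈ Set.Icc a b → v ∈ Set.Icc a b → |u - v| ≤ δ →
      ‖f u - f v‖ ≤ ε / (2 * ‖ξ‖))
    (θ₁ θ₂ : Finset ℝ)
    (hθ₁ : IsPartitionOf a b θ₁) (hθ₂ : IsPartitionOf a b θ₂)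
    (hmesh₁ : meshOf θ₁ < δ) (hmesh₂ : meshOf θ₂ < δ) :
    ‖sigmaSum f P θ₁ ξ - sigmaSum f P θ₂ ξ‖ ≤ ε := by
  by_cases hξ : ξ = 0
  · simp [hξ, hε.le]
  have hξ' : 0 < ‖ξ‖ := norm_pos_iff.2 hξ
  obtain ⟨g₁, hg₁⟩ := exists_left a b δ hδ θ₁ hθ₁ hmesh₁
  obtain ⟨g₂, hg₂⟩ := exists_left a b δ hδ θ₂ hθ₂ hmesh₂
  have e₁ : sigmaSum f P θ₁ = sSum (fun x => f (g₁ x)) P ((θ₂ ∪ θ₁).sort (· ≤ ·)) :=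
    (sSum_eq f P _).trans (sSum_union f P a b θ₁ θ₂ g₁ hθ₁ hθ₂.2.2 fun x hx => (hg₁ x hx).1)
  have e₂ : sigmaSum f P θ₂ = sSum (fun x => f (g₂ x)) P ((θ₂ ∪ θ₁).sort (· ≤ ·)) := by
    rw [Finset.union_comm]
    exact (sSum_eq f P _).trans
      (sSum_union f P a b θ₂ θ₁ g₂ hθ₂ hθ₁.2.2 fun x hx => (hg₂ x hx).1)
  rw [← ContinuousLinearMap.sub_apply, e₁, e₂, sSum_sub]
  have hall : ∀ y ∈ (θ₂ ∪ θ₁).sort (· ≤ ·), y ∈ Set.Icc a b := by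
    intro y hy
    rw [Finset.mem_sort, Finset.mem_union] at hy
    rcases hy with hy | hy
    · exact hθ₂.2.2 y hy
    · exact hθ₁.2.2 y hy
  have hs : ((θ₂ ∪ θ₁).sort (· ≤ ·)).Pairwise (· < ·) := (Finset.sortedLT_sort _).pairwise
  generalize (θ₂ ∪ θ₁).sort (· ≤ ·) = L at hall hs
  cases L with
  | nil => simp [sSum, hε.le]
  | cons s L =>
    have hs0 : 0 ≤ s := ha.trans (hall s (by simp)).1
    have := norm_sSum (fun x => f (g₁ x) - f (g₂ x)) P hP_proj hP_mono (ε / (2 * ‖ξ‖))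
      (by positivity) ξ L s hs0 hs ?_ ?_
    · have h2 : ‖sSum (fun x => f (g₁ x) - f (g₂ x)) P (s :: L) ξ‖ ^ 2 ≤ (ε / 2) ^ 2 := by
        refine this.trans ?_
        have : (ε / (2 * ‖ξ‖)) ^ 2 * (‖ξ‖ ^ 2 - ‖P s ξ‖ ^ 2) ≤
            (ε / (2 * ‖ξ‖)) ^ 2 * ‖ξ‖ ^ 2 := by
          gcongr
          nlinarith [sq_nonneg ‖P s ξ‖]
        refine this.trans (le_of_eq ?_)
        field_simp
      have := abs_le_of_sq_le_sq h2 (by positivity)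
      rw [abs_norm] at this
      linarith
    · intro x hx u hxu
      obtain ⟨⟨a1, a2, a3⟩, a4⟩ := hg₁ x (hall x hx)
      obtain ⟨⟨b1, b2, b3⟩, b4⟩ := hg₂ x (hall x hx)
      rw [ContinuousLinearMap.sub_comp, ContinuousLinearMap.comp_sub,
        hf_adapted _ _ (ha.trans (hθ₁.2.2 _ a1).1) (a2.trans hxu),
        hf_adapted _ _ (ha.trans (hθ₂.2.2 _ b1).1) (b2.trans hxu)]
    · intro x hx
      obtain ⟨⟨a1, a2, a3⟩, a4⟩ := hg₁ x (hall x hx)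
      obtain ⟨⟨b1, b2, b3⟩, b4⟩ := hg₂ x (hall x hx)
      apply hf_osc _ _ (hθ₁.2.2 _ a1) (hθ₂.2.2 _ b1)
      rw [abs_le]
      constructor <;> linarith
end

section
/- Let (P_t)_{t≥0} be an increasing family of orthogonal projections on H and let (ξ_t)_{t≥0} be an H-valued martingale with respect to (P_t), i.e. ξ_s = P_s ξ_t whenever s ≤ t. Let f : [0,∞) → B(H) be hermitian, increasing, and adapted-commuting with respect to (P_t), and fix [a,b] ⊆ [0,∞). Then the net of vectors Σ_{k=1}^m f(t_{k−1})(ξ_{t_k} − ξ_{t_{k−1}}), indexed by the partitions {a = t_0 < ⋯ < t_m = b} of [a,b] directed by refinement, converges in norm in H, and the norm of the limit is at most max{‖f(a)‖, ‖f(b)‖} · ‖ξ_b‖. -/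
/-- `vecSum f ξ θ` is the vector sum Σ_{k=1}^m f(t_{k−1})(ξ_{t_k} − ξ_{t_{k−1}})
where t₀ < t₁ < ⋯ < tₘ is the increasing enumeration of the finite set θ. -/
noncomputable def vecSum {H : Type*} [NormedAddCommGroup H] [InnerProductSpace ℂ H]
    (f : ℝ → H →L[ℂ] H) (ξ : ℝ → H) (θ : Finset ℝ) : H :=
  (((θ.sort (· ≤ ·)).zip (θ.sort (· ≤ ·)).tail).map
    (fun p => f p.1 (ξ p.2 - ξ p.1))).sum

open ContinuousLinearMap in
/-- Self-adjoint operators squeezed in the quadratic-form sense are norm bounded. -/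
lemma aux_norm_le {H : Type*} [NormedAddCommGroup H] [InnerProductSpace ℂ H] [CompleteSpace H]
    (L T U : H →L[ℂ] H) (hT : IsSelfAdjoint T) (h1 : L ≤ T) (h2 : T ≤ U) :
    ‖T‖ ≤ max ‖L‖ ‖U‖ := by
  rw [norm_eq_iSup_rayleighQuotient T hT.isSymmetric]
  refine ciSup_le fun x => ?_
  have e1 : L.rayleighQuotient x ≤ T.rayleighQuotient x := by
    unfold rayleighQuotient reApplyInnerSelf
    have := IsPositive.re_inner_nonneg_left h1 x
    simp only [sub_apply, inner_sub_left, map_sub] at this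
    exact div_le_div_of_nonneg_right (sub_nonneg.1 this) (by positivity)
  have e2 : T.rayleighQuotient x ≤ U.rayleighQuotient x := by
    unfold rayleighQuotient reApplyInnerSelf
    have := IsPositive.re_inner_nonneg_left h2 x
    simp only [sub_apply, inner_sub_left, map_sub] at this
    exact div_le_div_of_nonneg_right (sub_nonneg.1 this) (by positivity)
  have e3 := abs_le.1 (L.rayleighQuotient_le_norm x)
  have e4 := abs_le.1 (U.rayleighQuotient_le_norm x)
  rw [abs_le]
  constructor
  · linarith [le_max_left ‖L‖ ‖U‖]
  · linarith [le_max_right ‖L‖ ‖U‖]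

open ContinuousLinearMap in
lemma aux_cs {H : Type*} [NormedAddCommGroup H] [InnerProductSpace ℂ H] [CompleteSpace H]
    (B : H →L[ℂ] H) (hB : 0 ≤ B) (x : H) :
    ‖B x‖ ^ 2 ≤ ‖B‖ * (inner ℂ (B x) x).re := by
  obtain ⟨C, rfl⟩ := CStarAlgebra.nonneg_iff_eq_star_mul_self.1 hB
  rw [CStarRing.norm_star_mul_self]
  have e : (inner ℂ ((star C * C) x) x).re = ‖C x‖ ^ 2 := by
    rw [mul_apply_eq_comp, star_eq_adjoint, adjoint_inner_left]
    exact inner_self_eq_norm_sq (𝕜 := ℂ) (C x)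
  rw [e]
  have := (star C).le_opNorm (C x)
  rw [norm_star] at this
  calc ‖(star C * C) x‖ ^ 2 ≤ (‖C‖ * ‖C x‖) ^ 2 := by
        gcongr
        exact this
    _ = _ := by ring

open ContinuousLinearMap Filter Topology in
/-- Vigier: bounded increasing nets converge strongly. -/
lemma aux_vigier {H : Type*} [NormedAddCommGroup H] [InnerProductSpace ℂ H] [CompleteSpace H]
    {ι : Type*} [Nonempty ι] [SemilatticeSup ι] (A : ι → H →L[ℂ] H) (hA : Monotone A)
    (M : ℝ) (hM : ∀ i, ‖A i‖ ≤ M) (x : H) :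
    ∃ v, Tendsto (fun i => A i x) atTop (𝓝 v) := by
  have hmono : Monotone fun i => (inner ℂ (A i x) x).re := by
    intro i j hij
    have := IsPositive.re_inner_nonneg_left (hA hij) x
    simp only [sub_apply, inner_sub_left, map_sub] at this
    exact sub_nonneg.1 this
  have hbdd : BddAbove (Set.range fun i => (inner ℂ (A i x) x).re) := by
    refine ⟨M * ‖x‖ * ‖x‖, ?_⟩
    rintro _ ⟨i, rfl⟩
    calc (inner ℂ (A i x) x).re ≤ ‖inner ℂ (A i x) x‖ := Complex.re_le_norm _
      _ ≤ ‖A i x‖ * ‖x‖ := norm_inner_le_norm _ _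
      _ ≤ M * ‖x‖ * ‖x‖ := by
        gcongr
        exact (A i).le_of_opNorm_le (hM i) x
  have hlim := tendsto_atTop_ciSup hmono hbdd
  have hM0 : 0 ≤ M := (norm_nonneg _).trans (hM (Classical.arbitrary ι))
  apply cauchySeq_tendsto_of_complete
  rw [Metric.cauchySeq_iff']
  intro ε hε
  have hδ : 0 < ε ^ 2 / (2 * M + 1) := by positivity
  obtain ⟨N, hN⟩ := Metric.cauchySeq_iff'.1 hlim.cauchySeq _ hδ
  refine ⟨N, fun n hn => ?_⟩
  have h1 := hN n hn
  rw [Real.dist_eq] at h1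
  have h1 := (abs_lt.1 h1).2
  have h2 := aux_cs (A n - A N) (sub_nonneg.2 (hA hn)) x
  have h3 : ‖A n - A N‖ ≤ 2 * M := by
    linarith [norm_sub_le (A n) (A N), hM n, hM N]
  simp only [sub_apply, inner_sub_left, Complex.sub_re] at h2
  have h4 := sub_nonneg.2 (hmono hn)
  rw [lt_div_iff₀ (by positivity)] at h1
  rw [dist_eq_norm]
  refine lt_of_pow_lt_pow_left₀ 2 hε.le ?_
  simp only at h1 h4
  nlinarith

/-- Running sum, with coefficient time `c` and position `p`. -/
noncomputable def auxG {H : Type*} [NormedAddCommGroup H] [InnerProductSpace ℂ H]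
    (f P : ℝ → H →L[ℂ] H) (b : ℝ) : ℝ → ℝ → List ℝ → (H →L[ℂ] H)
  | c, p, [] => f c * (P b - P p)
  | c, p, t :: l => f c * (P t - P p) + auxG f P b t t l

section
variable {H : Type*} [NormedAddCommGroup H] [InnerProductSpace ℂ H] [CompleteSpace H]
  {P f : ℝ → H →L[ℂ] H}

lemma aux_proj
    (hP_proj : ∀ s, 0 ≤ s → IsSelfAdjoint (P s) ∧ P s ∘L P s = P s)
    (hP_mono : ∀ s u, 0 ≤ s → s ≤ u → P s ∘L P u = P s ∧ P u ∘L P s = P s)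
    {p t : ℝ} (hp : 0 ≤ p) (hpt : p ≤ t) :
    IsStarProjection (P t - P p) := by
  constructor
  · have h1 := (hP_mono p t hp hpt).1
    have h2 := (hP_mono p t hp hpt).2
    have h3 := (hP_proj p hp).2
    have h4 := (hP_proj t (hp.trans hpt)).2
    change P p * P t = _ at h1
    change P t * P p = _ at h2
    change P p * P p = _ at h3
    change P t * P t = _ at h4
    change (P t - P p) * (P t - P p) = _
    rw [sub_mul, mul_sub, mul_sub, h1, h2, h3, h4]
    abel
  · exact (hP_proj t (hp.trans hpt)).1.sub (hP_proj p hp).1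

lemma aux_comm
    (hf_adapted : ∀ s u, 0 ≤ s → s ≤ u → f s ∘L P u = P u ∘L f s)
    {c p t : ℝ} (hc : 0 ≤ c) (hcp : c ≤ p) (hpt : p ≤ t) :
    f c * (P t - P p) = (P t - P p) * f c := by
  have h1 : f c * P t = P t * f c := hf_adapted c t hc (hcp.trans hpt)
  have h2 : f c * P p = P p * f c := hf_adapted c p hc hcp
  rw [mul_sub, sub_mul, h1, h2]

lemma aux_le
    (hP_proj : ∀ s, 0 ≤ s → IsSelfAdjoint (P s) ∧ P s ∘L P s = P s)
    (hP_mono : ∀ s u, 0 ≤ s → s ≤ u → P s ∘L P u = P s ∧ P u ∘L P s = P s)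
    (hf_incr : ∀ u v, 0 ≤ u → u ≤ v → (f v - f u).IsPositive)
    (hf_adapted : ∀ s u, 0 ≤ s → s ≤ u → f s ∘L P u = P u ∘L f s)
    {c d p t : ℝ} (hc : 0 ≤ c) (hcd : c ≤ d) (hdp : d ≤ p) (hpt : p ≤ t) :
    f c * (P t - P p) ≤ f d * (P t - P p) := by
  have hQ := aux_proj hP_proj hP_mono ((hc.trans hcd).trans hdp) hpt
  have c1 := aux_comm hf_adapted hc (hcd.trans hdp) hpt
  have c2 := aux_comm hf_adapted (hc.trans hcd) hdp hpt
  generalize P t - P p = Q at *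
  have h0 : 0 ≤ f d - f c := by
    rw [ContinuousLinearMap.nonneg_iff_isPositive]
    exact hf_incr c d hc hcd
  have := star_left_conjugate_nonneg h0 Q
  rw [← sub_nonneg]
  convert this using 1
  have e1 : Q * Q = Q := hQ.isIdempotentElem
  have e2 : star Q = Q := hQ.isSelfAdjoint
  rw [e2, mul_sub, ← c1, ← c2, sub_mul, mul_assoc, mul_assoc, e1]

/-- Refinement increases the sum. -/
lemma aux_mono
    (hP_proj : ∀ s, 0 ≤ s → IsSelfAdjoint (P s) ∧ P s ∘L P s = P s)
    (hP_mono : ∀ s u, 0 ≤ s → s ≤ u → P s ∘L P u = P s ∧ P u ∘L P s = P s)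
    (hf_incr : ∀ u v, 0 ≤ u → u ≤ v → (f v - f u).IsPositive)
    (hf_adapted : ∀ s u, 0 ≤ s → s ≤ u → f s ∘L P u = P u ∘L f s)
    {b : ℝ} {l₁ l₂ : List ℝ} (h : l₁.Sublist l₂) :
    ∀ (c d p : ℝ), 0 ≤ c → c ≤ d → d ≤ p → p ≤ b → (p :: l₂).Pairwise (· ≤ ·) →
      (∀ x ∈ l₂, x ≤ b) → auxG f P b c p l₁ ≤ auxG f P b d p l₂ := by
  induction h with
  | slnil =>
    intro c d p hc hcd hdp hpb _ _
    exact aux_le hP_proj hP_mono hf_incr hf_adapted hc hcd hdp hpb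
  | @cons l₁ l₂ t h ih =>
    intro c d p hc hcd hdp hpb hs hb
    rw [List.pairwise_cons] at hs
    have hpt : p ≤ t := hs.1 t (by simp)
    have htb : t ≤ b := hb t (by simp)
    have split : auxG f P b c p l₁ = f c * (P t - P p) + auxG f P b c t l₁ := by
      cases l₁ with
      | nil => simp only [auxG]; rw [← mul_add]; congr 1; abel
      | cons u l => simp only [auxG]; rw [← add_assoc, ← mul_add]; congr 2; abel
    rw [split]
    change _ ≤ f d * (P t - P p) + auxG f P b t t l₂
    exact add_le_add (aux_le hP_proj hP_mono hf_incr hf_adapted hc hcd hdp hpt)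
      (ih c t t hc (by linarith) le_rfl htb hs.2 (fun x hx => hb x (by simp [hx])))
  | @cons_cons l₁ l₂ t h ih =>
    intro c d p hc hcd hdp hpb hs hb
    rw [List.pairwise_cons] at hs
    have hpt : p ≤ t := hs.1 t (by simp)
    have htb : t ≤ b := hb t (by simp)
    change f c * (P t - P p) + auxG f P b t t l₁ ≤ f d * (P t - P p) + auxG f P b t t l₂
    exact add_le_add (aux_le hP_proj hP_mono hf_incr hf_adapted hc hcd hdp hpt)
      (ih t t t (by linarith) le_rfl le_rfl htb hs.2 (fun x hx => hb x (by simp [hx])))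

lemma aux_le_norm
    (hP_proj : ∀ s, 0 ≤ s → IsSelfAdjoint (P s) ∧ P s ∘L P s = P s)
    (hP_mono : ∀ s u, 0 ≤ s → s ≤ u → P s ∘L P u = P s ∧ P u ∘L P s = P s)
    (hf_herm : ∀ s, 0 ≤ s → IsSelfAdjoint (f s))
    (hf_incr : ∀ u v, 0 ≤ u → u ≤ v → (f v - f u).IsPositive)
    (hf_adapted : ∀ s u, 0 ≤ s → s ≤ u → f s ∘L P u = P u ∘L f s)
    {b c p t : ℝ} (hc : 0 ≤ c) (hcp : c ≤ p) (hpt : p ≤ t) (htb : t ≤ b) :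
    f c * (P t - P p) ≤ ‖f b‖ • (P t - P p) := by
  have hQ := aux_proj hP_proj hP_mono (hc.trans hcp) hpt
  have c1 := aux_comm hf_adapted hc hcp hpt
  generalize P t - P p = Q at *
  have h0 : f c ≤ f b := hf_incr c b hc (by linarith)
  have h1 := star_left_conjugate_le_conjugate h0 Q
  have h2 := CStarAlgebra.star_left_conjugate_le_norm_smul (a := Q) (hf_herm b (by linarith))
  have e1 : Q * Q = Q := hQ.isIdempotentElem
  have e2 : star Q = Q := hQ.isSelfAdjoint
  rw [e2] at h1 h2
  rw [e1] at h2
  rw [← c1, mul_assoc, e1] at h1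
  exact h1.trans h2

lemma aux_upper
    (hP_proj : ∀ s, 0 ≤ s → IsSelfAdjoint (P s) ∧ P s ∘L P s = P s)
    (hP_mono : ∀ s u, 0 ≤ s → s ≤ u → P s ∘L P u = P s ∧ P u ∘L P s = P s)
    (hf_herm : ∀ s, 0 ≤ s → IsSelfAdjoint (f s))
    (hf_incr : ∀ u v, 0 ≤ u → u ≤ v → (f v - f u).IsPositive)
    (hf_adapted : ∀ s u, 0 ≤ s → s ≤ u → f s ∘L P u = P u ∘L f s)
    {b : ℝ} (l : List ℝ) :
    ∀ (c p : ℝ), 0 ≤ c → c ≤ p → p ≤ b → (p :: l).Pairwise (· ≤ ·) →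
      (∀ x ∈ l, x ≤ b) → auxG f P b c p l ≤ ‖f b‖ • (P b - P p) := by
  induction l with
  | nil =>
    intro c p hc hcp hpb _ _
    exact aux_le_norm hP_proj hP_mono hf_herm hf_incr hf_adapted hc hcp hpb le_rfl
  | cons t l ih =>
    intro c p hc hcp hpb hs hb
    rw [List.pairwise_cons] at hs
    have hpt : p ≤ t := hs.1 t (by simp)
    have htb : t ≤ b := hb t (by simp)
    have e : ‖f b‖ • (P b - P p) = ‖f b‖ • (P t - P p) + ‖f b‖ • (P b - P t) := by
      rw [← smul_add]; congr 1; abel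
    rw [e]
    exact add_le_add (aux_le_norm hP_proj hP_mono hf_herm hf_incr hf_adapted hc hcp hpt htb)
      (ih t t (by linarith) le_rfl htb hs.2 (fun x hx => hb x (by simp [hx])))

lemma aux_sa
    (hP_proj : ∀ s, 0 ≤ s → IsSelfAdjoint (P s) ∧ P s ∘L P s = P s)
    (hf_herm : ∀ s, 0 ≤ s → IsSelfAdjoint (f s))
    (hf_adapted : ∀ s u, 0 ≤ s → s ≤ u → f s ∘L P u = P u ∘L f s)
    {b : ℝ} (l : List ℝ) :
    ∀ (c p : ℝ), 0 ≤ c → c ≤ p → p ≤ b → (p :: l).Pairwise (· ≤ ·) →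
      (∀ x ∈ l, x ≤ b) → IsSelfAdjoint (auxG f P b c p l) := by
  have key : ∀ c p t : ℝ, 0 ≤ c → c ≤ p → p ≤ t → IsSelfAdjoint (f c * (P t - P p)) := by
    intro c p t hc hcp hpt
    rw [← (hf_herm c hc).commute_iff ((hP_proj t (by linarith)).1.sub (hP_proj p (by linarith)).1)]
    exact aux_comm hf_adapted hc hcp hpt
  induction l with
  | nil => intro c p hc hcp hpb _ _; exact key _ _ _ hc hcp hpb
  | cons t l ih =>
    intro c p hc hcp hpb hs hb
    rw [List.pairwise_cons] at hs
    have hpt : p ≤ t := hs.1 t (by simp)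
    have htb : t ≤ b := hb t (by simp)
    exact (key _ _ _ hc hcp hpt).add
      (ih t t (by linarith) le_rfl htb hs.2 (fun x hx => hb x (by simp [hx])))

lemma aux_norm
    (hP_proj : ∀ s, 0 ≤ s → IsSelfAdjoint (P s) ∧ P s ∘L P s = P s)
    (hP_mono : ∀ s u, 0 ≤ s → s ≤ u → P s ∘L P u = P s ∧ P u ∘L P s = P s)
    (hf_herm : ∀ s, 0 ≤ s → IsSelfAdjoint (f s))
    (hf_incr : ∀ u v, 0 ≤ u → u ≤ v → (f v - f u).IsPositive)
    (hf_adapted : ∀ s u, 0 ≤ s → s ≤ u → f s ∘L P u = P u ∘L f s)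
    {a b : ℝ} (ha : 0 ≤ a) (hab : a ≤ b) (l : List ℝ)
    (hs : (a :: l).Pairwise (· ≤ ·)) (hb : ∀ x ∈ l, x ≤ b) :
    ‖auxG f P b a a l‖ ≤ max ‖f a‖ ‖f b‖ := by
  have hQ := (aux_proj hP_proj hP_mono ha hab).norm_le
  refine (aux_norm_le _ _ _ (aux_sa hP_proj hf_herm hf_adapted l a a ha le_rfl hab hs hb)
    (aux_mono hP_proj hP_mono hf_incr hf_adapted (List.nil_sublist l) a a a ha le_rfl le_rfl hab
      hs hb)
    (aux_upper hP_proj hP_mono hf_herm hf_incr hf_adapted l a a ha le_rfl hab hs hb)).trans ?_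
  refine max_le_max ?_ ?_
  · exact (norm_mul_le _ _).trans (mul_le_of_le_one_right (norm_nonneg _) hQ)
  · rw [norm_smul, norm_norm]
    exact mul_le_of_le_one_right (norm_nonneg _) hQ

lemma aux_vec {ξ : ℝ → H} (hξ_mart : ∀ s t, 0 ≤ s → s ≤ t → ξ s = P s (ξ t)) {b : ℝ}
    (l : List ℝ) : ∀ p : ℝ, 0 ≤ p → (p :: l).Pairwise (· < ·) → (∀ x ∈ p :: l, x ≤ b) →
      b ∈ p :: l →
      (((p :: l).zip l).map (fun q => f q.1 (ξ q.2 - ξ q.1))).sum = auxG f P b p p l (ξ b) := by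
  induction l with
  | nil =>
    intro p hp _ _ hb
    have : b = p := by simpa using hb
    subst this
    simp [auxG]
  | cons t l ih =>
    intro p hp hs hle hb
    have hs' := List.pairwise_cons.1 hs
    have hpt : p < t := hs'.1 t (by simp)
    have htb : t ≤ b := hle t (by simp)
    have hb' : b ∈ t :: l := by
      rcases List.mem_cons.1 hb with h | h
      · linarith
      · exact h
    have := ih t (by linarith) hs'.2 (fun x hx => hle x (List.mem_cons_of_mem _ hx)) hb'
    rw [List.zip_cons_cons, List.map_cons, List.sum_cons, this]
    change _ = f p (P t (ξ b) - P p (ξ b)) + auxG f P b t t l (ξ b)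
    rw [← hξ_mart t b (by linarith) htb, ← hξ_mart p b hp (by linarith)]
end

/-- For increasing projections (P_t), an H-valued martingale (ξ_t) (i.e.
ξ_s = P_s ξ_t for s ≤ t), and hermitian increasing adapted-commuting f, the net of
vectors Σ f(t_{k−1})(ξ_{t_k} − ξ_{t_{k−1}}), indexed by the partitions of [a,b] directed
by refinement, converges in norm, and the norm of the limit is at most
max{‖f(a)‖, ‖f(b)‖}·‖ξ_b‖. -/
theorem martingale_integral_exists
    {H : Type*} [NormedAddCommGroup H] [InnerProductSpace ℂ H] [CompleteSpace H]
    (P : ℝ → H →L[ℂ] H)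
    (hP_proj : ∀ s, 0 ≤ s → IsSelfAdjoint (P s) ∧ P s ∘L P s = P s)
    (hP_mono : ∀ s u, 0 ≤ s → s ≤ u → P s ∘L P u = P s ∧ P u ∘L P s = P s)
    (ξ : ℝ → H)
    (hξ_mart : ∀ s t, 0 ≤ s → s ≤ t → ξ s = P s (ξ t))
    (f : ℝ → H →L[ℂ] H)
    (hf_herm : ∀ s, 0 ≤ s → IsSelfAdjoint (f s))
    (hf_incr : ∀ u v, 0 ≤ u → u ≤ v → (f v - f u).IsPositive)
    (hf_adapted : ∀ s u, 0 ≤ s → s ≤ u → f s ∘L P u = P u ∘L f s)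
    (a b : ℝ) (ha : 0 ≤ a) (hab : a < b) :
    ∃ v : H, ‖v‖ ≤ max ‖f a‖ ‖f b‖ * ‖ξ b‖ ∧
      ∀ ε > (0 : ℝ), ∃ θ₀ : Finset ℝ, IsPartitionOf a b θ₀ ∧
        ∀ θ : Finset ℝ, IsPartitionOf a b θ → θ₀ ⊆ θ →
          ‖vecSum f ξ θ - v‖ < ε := by
  have hs0 : ∀ θ : Finset ℝ, (a :: (θ.filter (· ∈ Set.Ioc a b)).sort (· ≤ ·)).Pairwise (· ≤ ·) := by
    intro θ
    rw [List.pairwise_cons]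
    refine ⟨fun x hx => ?_, Finset.pairwise_sort _ _⟩
    rw [Finset.mem_sort, Finset.mem_filter] at hx
    exact hx.2.1.le
  have hb0 : ∀ θ : Finset ℝ, ∀ x ∈ (θ.filter (· ∈ Set.Ioc a b)).sort (· ≤ ·), x ≤ b := by
    intro θ x hx
    rw [Finset.mem_sort, Finset.mem_filter] at hx
    exact hx.2.2
  set A : Finset ℝ → H →L[ℂ] H := fun θ =>
    auxG f P b a a ((θ.filter (· ∈ Set.Ioc a b)).sort (· ≤ ·)) with hA
  have hmono : Monotone A := by
    intro θ θ' h
    refine aux_mono hP_proj hP_mono hf_incr hf_adapted ?_ a a a ha le_rfl le_rfl hab.le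
      (hs0 θ') (hb0 θ')
    refine List.sublist_of_subperm_of_pairwise ?_ (Finset.pairwise_sort _ (· ≤ ·))
      (Finset.pairwise_sort _ (· ≤ ·))
    refine List.subperm_of_subset (Finset.sort_nodup _ _) fun x hx => ?_
    rw [Finset.mem_sort, Finset.mem_filter] at hx ⊢
    exact ⟨h hx.1, hx.2⟩
  have hnorm : ∀ θ, ‖A θ‖ ≤ max ‖f a‖ ‖f b‖ := fun θ =>
    aux_norm hP_proj hP_mono hf_herm hf_incr hf_adapted ha hab.le _ (hs0 θ) (hb0 θ)
  have hvec : ∀ θ, IsPartitionOf a b θ → vecSum f ξ θ = A θ (ξ b) := by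
    rintro θ ⟨h1, h2, h3⟩
    have e : θ = insert a (θ.filter (· ∈ Set.Ioc a b)) := by
      ext x
      simp only [Finset.mem_insert, Finset.mem_filter, Set.mem_Ioc]
      constructor
      · intro hx
        rcases (h3 x hx).1.eq_or_lt with h | h
        · exact Or.inl h.symm
        · exact Or.inr ⟨hx, h, (h3 x hx).2⟩
      · rintro (rfl | h)
        · exact h1
        · exact h.1
    have e2 : θ.sort (· ≤ ·) = a :: (θ.filter (· ∈ Set.Ioc a b)).sort (· ≤ ·) := by
      conv_lhs => rw [e]
      refine Finset.sort_insert _ (fun x hx => ?_) (fun hx => ?_)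
      · exact (Finset.mem_filter.1 hx).2.1.le
      · exact lt_irrefl _ (Finset.mem_filter.1 hx).2.1
    have hlt : (θ.sort (· ≤ ·)).Pairwise (· < ·) := (Finset.sortedLT_sort θ).pairwise
    have hm : ∀ x, x ∈ θ.sort (· ≤ ·) ↔ x ∈ θ := fun x => Finset.mem_sort _
    unfold vecSum
    rw [e2] at hlt hm ⊢
    exact aux_vec hξ_mart _ a ha hlt (fun x hx => (h3 x ((hm x).1 hx)).2) ((hm b).2 h2)
  obtain ⟨v, hv⟩ := aux_vigier A hmono _ hnorm (ξ b)
  refine ⟨v, le_of_tendsto hv.norm (Filter.Eventually.of_forall fun θ =>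
    (A θ).le_of_opNorm_le (hnorm θ) _), fun ε hε => ?_⟩
  obtain ⟨θ₁, hθ₁⟩ := Metric.tendsto_atTop.1 hv ε hε
  refine ⟨insert a (insert b (θ₁.filter (· ∈ Set.Ioc a b))), ⟨by simp, by simp, ?_⟩, ?_⟩
  · intro x hx
    simp only [Finset.mem_insert, Finset.mem_filter, Set.mem_Ioc] at hx
    rcases hx with rfl | rfl | h
    · exact ⟨le_rfl, hab.le⟩
    · exact ⟨hab.le, le_rfl⟩
    · exact ⟨h.2.1.le, h.2.2⟩
  · intro θ hθ hsub
    have e : A θ = A (θ ∪ θ₁) := by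
      simp only [hA]
      congr 2
      ext x
      simp only [Finset.mem_filter, Finset.mem_union]
      constructor
      · exact fun h => ⟨Or.inl h.1, h.2⟩
      · rintro ⟨h | h, h'⟩
        · exact ⟨h, h'⟩
        · exact ⟨hsub (by simp [h, h'.1, h'.2]), h'⟩
    rw [hvec θ hθ, e, ← dist_eq_norm]
    exact hθ₁ _ Finset.subset_union_right
end
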